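/- Let d ∈ ℕ. There exists a constant C(d) > 0 depending only on d such that for every n ∈ ℕ, every Gaussian random vector X in ℝⁿ, every non-constant polynomial g on ℝⁿ of total degree at most d, and every φ ∈ C₀^∞(ℝ), one has [𝔻g(X)]^{1/(2d)} 𝔼 φ'(g(X)) ≤ C(d) ‖φ‖_∞^{1/d} ‖φ'‖_∞^{1−1/d}, where 𝔻g(X) is the variance of g(X). -/

import Mathlib

/-!
After an affine substitution the Gaussian vector may be taken standard. Let `X`, `Y` be independent
standard Gaussian vectors; for every `θ` the pair
`(cos θ X + sin θ Y, -sin θ X + cos θ Y)` has the law of `(X, Y)`.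

Along a circle `u(θ) = g(cos θ X + sin θ Y)` is a trigonometric polynomial of degree at most `d`, and
`a = u'` is the derivative of `g` in the direction of the rotated `Y`. Writing
`φ'(u) a² / (a² + δ²) = (φ ∘ u)' · a / (a² + δ²)` and integrating by parts in `θ` (`ibp_circle`)
gives a bound `O(sup |φ ∘ u| / δ)`: trigonometric polynomials have boundedly many zeros, so
`a / (a² + δ²)` has total variation `O(1 / δ)`. Averaging over `(X, Y)` yields `ibp_expect`, in which
`φ` may even grow linearly away from the mean of `g(X)`, because the supremum of a trigonometric
polynomial is controlled by finitely many of its values (`exists_sup_bound`).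

The remaining part `φ'(g) δ² / (a² + δ²)` is controlled by a smoothed small ball estimate
(`SmallBall`) for `x ↦ ⟨∇g(x), y⟩`, which has degree at most `d - 1`. Since its second moment `Q(y)`
may be small for some `y`, everything is weighted by `Q / (Q + T)`, where `T = E |∇g(X)|²`; this
weight has mean bounded below (`omega_lower`), and `T` dominates the variance by the Poincaré
inequality. Optimising over `δ` gives the derivative estimate `DerivBound d` from `SmallBall (d - 1)`
(`derivBound_of_smallBall`).

Conversely `DerivBound d` applied to a rescaled arctangent centred at the mean implies `SmallBall d`
(`smallBall_of_derivBound`). Starting from degree one, where `⟨∇g, y⟩` does not depend on the point,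
induction on the degree proves the estimate for all `d`.
-/

open MeasureTheory ProbabilityTheory

/-- The standard Gaussian measure on `ℝⁿ` (i.i.d. `N(0,1)` coordinates). -/
noncomputable def stdGaussian (n : ℕ) : Measure (Fin n → ℝ) :=
  Measure.pi fun _ => gaussianReal 0 1

/-- A (possibly degenerate) Gaussian distribution on `ℝⁿ`: the image of the standard
Gaussian measure under an affine map. -/
def IsGaussianVec {n : ℕ} (μ : Measure (Fin n → ℝ)) : Prop :=
  ∃ (L : (Fin n → ℝ) →ₗ[ℝ] (Fin n → ℝ)) (b : Fin n → ℝ),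
    μ = (stdGaussian n).map (fun x => b + L x)

namespace GaussPoly

/-! ### The standard Gaussian measure -/

/-- Shorthand for the standard Gaussian measure on `ℝⁿ`. -/
noncomputable abbrev gam (n : ℕ) : Measure (Fin n → ℝ) := _root_.stdGaussian n

instance gam_prob (n : ℕ) : IsProbabilityMeasure (gam n) := by
  unfold gam _root_.stdGaussian; infer_instance

lemma measurePreserving_coord (n : ℕ) (i : Fin n) :
    MeasurePreserving (fun x : Fin n → ℝ => x i) (gam n) (gaussianReal 0 1) :=
  measurePreserving_eval (fun _ : Fin n => gaussianReal 0 1) i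

lemma coord_law (n : ℕ) (i : Fin n) :
    (gam n).map (fun x => x i) = gaussianReal 0 1 :=
  (measurePreserving_coord n i).map_eq

lemma iIndep_coord (n : ℕ) : iIndepFun (fun (i : Fin n) (x : Fin n → ℝ) => x i) (gam n) :=
  iIndepFun_pi (X := fun (_ : Fin n) (t : ℝ) => t) (μ := fun _ : Fin n => gaussianReal 0 1)
    (fun _ => aemeasurable_id)

instance gam_gaussian (n : ℕ) : IsGaussian (gam n) := by
  have h := (iIndep_coord n).hasGaussianLaw (fun i => ⟨by
    rw [coord_law]; infer_instance⟩)
  have h2 := h.isGaussian_map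
  have : (gam n).map (fun ω => (fun i => ω i)) = gam n := Measure.map_id
  rwa [this] at h2

lemma memLp_coord (n : ℕ) (i : Fin n) (p : ENNReal) (hp : p ≠ ⊤) :
    MemLp (fun x : Fin n → ℝ => x i) p (gam n) :=
  (memLp_id_gaussianReal' (μ := 0) (v := 1) p hp).comp_measurePreserving
    (measurePreserving_coord n i)

lemma integral_coord (n : ℕ) (i : Fin n) : ∫ x, x i ∂(gam n) = 0 := by
  have h := integral_map (μ := gam n) (φ := fun x : Fin n → ℝ => x i) (f := fun t : ℝ => t)
    (Measurable.aemeasurable (by fun_prop)) (by fun_prop)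
  rw [← h, coord_law]; simp

lemma integral_dual (n : ℕ) (L : StrongDual ℝ (Fin n → ℝ)) : ∫ x, L x ∂(gam n) = 0 := by
  have h : ∀ x, L x = ∑ i, x i * L (Pi.single i 1) := fun x => by
    conv_lhs => rw [pi_eq_sum_univ' x]
    simp [map_sum, Pi.single]
  rw [integral_congr_ae (ae_of_all _ h), integral_finsetSum]
  · simp [integral_mul_const, integral_coord]
  · intro i _
    exact ((memLp_coord n i 1 (by simp)).integrable le_rfl).mul_const _

/-- The law of a linear form `⟨a, Y⟩` under the standard Gaussian is `N(0, |a|²)`. -/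
lemma linear_law (n : ℕ) (a : Fin n → ℝ) :
    (gam n).map (fun y => ∑ i, y i * a i) = gaussianReal 0 (∑ i, a i ^ 2).toNNReal := by
  let L : StrongDual ℝ (Fin n → ℝ) := ∑ i, a i • ContinuousLinearMap.proj (R := ℝ) i
  have hL : ∀ y, L y = ∑ i, y i * a i := fun y => by
    simp [L, mul_comm]
  have h := IsGaussian.map_eq_gaussianReal (μ := gam n) L
  rw [integral_dual] at h
  have hv : Var[L; gam n] = ∑ i, a i ^ 2 := by
    have : (L : (Fin n → ℝ) → ℝ) = ∑ i, fun y : Fin n → ℝ => a i * y i := by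
      ext y; simp [hL, mul_comm]
    rw [this, IndepFun.variance_sum]
    · refine Finset.sum_congr rfl fun i _ => ?_
      rw [variance_const_mul]
      have := variance_map (μ := gam n) (X := fun t : ℝ => t) (Y := fun x : Fin n → ℝ => x i)
        (by fun_prop) (Measurable.aemeasurable (by fun_prop))
      rw [coord_law, variance_fun_id_gaussianReal] at this
      have h2 : Var[fun y : Fin n → ℝ => y i; gam n] = 1 := by
        rw [show (fun y : Fin n → ℝ => y i) = (fun t : ℝ => t) ∘ (fun y => y i) from rfl, ← this]
        simp
      rw [h2]; ring
    · intro i _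
      exact (memLp_coord n i 2 (by simp)).const_mul _
    · intro i _ j _ hij
      exact ((iIndep_coord n).indepFun hij).comp (φ := fun t => a i * t) (ψ := fun t => a j * t)
        (by fun_prop) (by fun_prop)
  rw [hv] at h
  rw [← h]
  congr 1
  ext y; rw [hL]

lemma rotation_mp (n : ℕ) (θ : ℝ) :
    MeasurePreserving (ContinuousLinearMap.rotation (E := Fin n → ℝ) θ)
      ((gam n).prod (gam n)) ((gam n).prod (gam n)) :=
  ⟨by fun_prop, IsGaussian.map_rotation_eq_self_of_forall_strongDual_eq_zero
    (integral_dual n) θ⟩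

/-- Pushing an integral over a linear form to a one-dimensional standard Gaussian. -/
lemma integral_linear (n : ℕ) (a : Fin n → ℝ) (f : ℝ → ℝ) (hf : Measurable f) :
    ∫ y, f (∑ i, y i * a i) ∂(gam n)
      = ∫ z, f (Real.sqrt (∑ i, a i ^ 2) * z) ∂(gaussianReal 0 1) := by
  have h := integral_map (μ := gam n) (φ := fun y : Fin n → ℝ => ∑ i, y i * a i) (f := f)
    (Measurable.aemeasurable (by fun_prop)) hf.aestronglyMeasurable
  have h2 := integral_map (μ := gaussianReal 0 1)
    (φ := fun z : ℝ => Real.sqrt (∑ i, a i ^ 2) * z) (f := f)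
    (Measurable.aemeasurable (by fun_prop)) hf.aestronglyMeasurable
  rw [← h, ← h2, linear_law, gaussianReal_map_const_mul]
  have : (0:ℝ) ≤ ∑ i, a i ^ 2 := Finset.sum_nonneg fun i _ => sq_nonneg _
  congr 2
  · simp
  · ext; simp [this]

lemma integral_sq_gaussianReal : ∫ z, z ^ 2 ∂(gaussianReal 0 1) = 1 := by
  have h := variance_fun_id_gaussianReal (μ := 0) (v := 1)
  rw [variance_of_integral_eq_zero (by fun_prop) (by simp)] at h
  simpa using h

lemma integral_linear_sq (n : ℕ) (a : Fin n → ℝ) :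
    ∫ y, (∑ i, y i * a i) ^ 2 ∂(gam n) = ∑ i, a i ^ 2 := by
  rw [integral_linear n a (fun t => t ^ 2) (by fun_prop)]
  simp_rw [mul_pow]
  rw [integral_const_mul, integral_sq_gaussianReal, mul_one,
    Real.sq_sqrt (Finset.sum_nonneg fun i _ => sq_nonneg _)]

/-- The constant `E Z² / (Z² + 1)` for a standard normal `Z`. -/
noncomputable def kap : ℝ := ∫ z, z ^ 2 / (z ^ 2 + 1) ∂(gaussianReal 0 1)

lemma kap_pos : 0 < kap := by
  unfold kap
  have hle : ∀ z : ℝ, z ^ 2 / (z ^ 2 + 1) ≤ 1 := fun z => by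
    rw [div_le_one (by positivity)]; linarith
  have hi : Integrable (fun z : ℝ => z ^ 2 / (z ^ 2 + 1)) (gaussianReal 0 1) := by
    refine Integrable.of_bound (C := 1) ?_ (ae_of_all _ fun z => ?_)
    · exact (by fun_prop : Measurable (fun z : ℝ => z ^ 2 / (z ^ 2 + 1))).aestronglyMeasurable
    · rw [Real.norm_eq_abs, abs_of_nonneg (by positivity)]; exact hle z
  rw [integral_pos_iff_support_of_nonneg (fun z => by positivity) hi]
  have hs : Function.support (fun z : ℝ => z ^ 2 / (z ^ 2 + 1)) = {0}ᶜ := by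
    ext z
    have : z ^ 2 + 1 ≠ 0 := by positivity
    simp [this]
  have := nullSingletonClass_gaussianReal (μ := 0) (v := 1) one_ne_zero
  rw [hs, prob_compl_eq_one_sub (measurableSet_singleton _)]
  simp

/-- With `s = ⟨a, Y⟩²` and `p = |a|²`, one has `E s / (s + p) = kap`, unless `a = 0`. -/
lemma integral_linear_kap (n : ℕ) (a : Fin n → ℝ) (p : ℝ) (hp : p = ∑ i, a i ^ 2) (hp0 : 0 < p) :
    ∫ y, (∑ i, y i * a i) ^ 2 / ((∑ i, y i * a i) ^ 2 + p) ∂(gam n) = kap := by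
  rw [integral_linear n a (fun t => t ^ 2 / (t ^ 2 + p)) (by fun_prop), kap, ← hp]
  congr 1
  ext z
  rw [mul_pow, Real.sq_sqrt hp0.le]
  have : z ^ 2 + 1 ≠ 0 := by positivity
  have : p * z ^ 2 + p ≠ 0 := by positivity
  field_simp

/-! ### Polynomials: directional derivatives, degrees, integrability -/

open MvPolynomial in
lemma totalDegree_pderiv_le {n : ℕ} (i : Fin n) (g : MvPolynomial (Fin n) ℝ) :
    (pderiv i g).totalDegree ≤ g.totalDegree - 1 := by
  conv_lhs => rw [g.as_sum]
  rw [map_sum]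
  refine totalDegree_finsetSum_le fun m hm => ?_
  rw [pderiv_monomial]
  by_cases h : m i = 0
  · simp [h]
  · refine (totalDegree_monomial_le _ _).trans ?_
    have h1 := le_totalDegree hm
    have h2 : (m - Finsupp.single i 1).degree + 1 = m.degree := by
      have hle : Finsupp.single i 1 ≤ m := by
        rw [Finsupp.single_le_iff]; omega
      conv_rhs => rw [← tsub_add_cancel_of_le hle]
      rw [map_add, Finsupp.degree_single]
    have h3 : (m.sum fun _ e => e) = m.degree := rfl
    have h4 : ((m - Finsupp.single i 1).sum fun _ => id) = (m - Finsupp.single i 1).degree := rfl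
    omega

/-- The derivative of the polynomial `g` in direction `y`. -/
noncomputable def dir {n : ℕ} (y : Fin n → ℝ) (g : MvPolynomial (Fin n) ℝ) :
    MvPolynomial (Fin n) ℝ :=
  ∑ i, MvPolynomial.C (y i) * MvPolynomial.pderiv i g

lemma eval_dir {n : ℕ} (x y : Fin n → ℝ) (g : MvPolynomial (Fin n) ℝ) :
    MvPolynomial.eval x (dir y g) = ∑ i, y i * MvPolynomial.eval x (MvPolynomial.pderiv i g) := by
  simp [dir]

lemma totalDegree_dir_le {n d : ℕ} (y : Fin n → ℝ) (g : MvPolynomial (Fin n) ℝ)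
    (hg : g.totalDegree ≤ d) : (dir y g).totalDegree ≤ d - 1 := by
  refine MvPolynomial.totalDegree_finsetSum_le fun i _ => ?_
  refine (MvPolynomial.totalDegree_mul _ _).trans ?_
  have := totalDegree_pderiv_le i g
  simp only [MvPolynomial.totalDegree_C]
  omega

lemma totalDegree_bind₁_le {σ τ : Type*} (f : σ → MvPolynomial τ ℝ)
    (hf : ∀ i, (f i).totalDegree ≤ 1) (g : MvPolynomial σ ℝ) :
    (MvPolynomial.bind₁ f g).totalDegree ≤ g.totalDegree := by
  conv_lhs => rw [g.as_sum]
  rw [map_sum]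
  refine MvPolynomial.totalDegree_finsetSum_le fun m hm => ?_
  rw [MvPolynomial.bind₁_monomial]
  refine (MvPolynomial.totalDegree_mul _ _).trans ?_
  rw [MvPolynomial.totalDegree_C, zero_add]
  refine (MvPolynomial.totalDegree_finsetProd _ _).trans ?_
  refine le_trans ?_ (MvPolynomial.le_totalDegree hm)
  refine Finset.sum_le_sum fun i _ => ?_
  refine (MvPolynomial.totalDegree_pow _ _).trans ?_
  calc m i * (f i).totalDegree ≤ m i * 1 := Nat.mul_le_mul_left _ (hf i)
    _ = m i := mul_one _

lemma hasDerivAt_eval {n : ℕ} (g : MvPolynomial (Fin n) ℝ) (c : ℝ → Fin n → ℝ) (c' : Fin n → ℝ)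
    (θ : ℝ) (hc : ∀ i, HasDerivAt (fun t => c t i) (c' i) θ) :
    HasDerivAt (fun t => MvPolynomial.eval (c t) g) (MvPolynomial.eval (c θ) (dir c' g)) θ := by
  rw [eval_dir]
  induction g using MvPolynomial.induction_on with
  | C a => simpa using hasDerivAt_const θ a
  | add p q hp hq =>
    simp only [map_add, mul_add, Finset.sum_add_distrib]
    exact hp.add hq
  | mul_X p i hp =>
    simp only [map_mul, MvPolynomial.eval_X]
    refine (hp.mul (hc i)).congr_deriv ?_
    simp only [MvPolynomial.pderiv_mul, MvPolynomial.pderiv_X, map_add, map_mul,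
      MvPolynomial.eval_X, mul_add, Finset.sum_add_distrib, Finset.sum_mul]
    congr 1
    · exact Finset.sum_congr rfl fun j _ => by ring
    · rw [Finset.sum_eq_single i]
      · simp; ring
      · intro j _ hj; simp [Ne.symm hj]
      · simp

lemma continuous_eval_dir {n : ℕ} (g : MvPolynomial (Fin n) ℝ) :
    Continuous (fun z : (Fin n → ℝ) × (Fin n → ℝ) => MvPolynomial.eval z.1 (dir z.2 g)) := by
  simp only [eval_dir]
  refine continuous_finsetSum _ fun i _ => ?_
  refine Continuous.mul (by fun_prop) ?_
  exact (MvPolynomial.continuous_eval _).comp continuous_fst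

lemma memLp_mul_of_two_mul {α : Type*} [MeasurableSpace α] {μ : Measure α} {f g : α → ℝ}
    {p : ENNReal} (hf : MemLp f (2 * p) μ) (hg : MemLp g (2 * p) μ) :
    MemLp (fun x => f x * g x) p μ := by
  have : ENNReal.HolderTriple (2 * p) (2 * p) p := ⟨by
    rw [ENNReal.mul_inv (by simp) (by simp), ← two_mul, ← mul_assoc,
      ENNReal.mul_inv_cancel (by simp) (by simp), one_mul]⟩
  exact hg.mul' hf

lemma memLp_eval {n : ℕ} (g : MvPolynomial (Fin n) ℝ) (p : ENNReal) (hp : p ≠ ⊤) :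
    MemLp (fun x => MvPolynomial.eval x g) p (gam n) := by
  induction g using MvPolynomial.induction_on generalizing p with
  | C a => simpa using memLp_const a
  | add f h hf hh => simp only [map_add]; exact (hf p hp).add (hh p hp)
  | mul_X f i hf =>
    have h2 : 2 * p ≠ ⊤ := ENNReal.mul_ne_top (by simp) hp
    simpa using memLp_mul_of_two_mul (hf _ h2) (memLp_coord n i _ h2)

lemma integrable_eval {n : ℕ} (g : MvPolynomial (Fin n) ℝ) :
    Integrable (fun x => MvPolynomial.eval x g) (gam n) :=
  (memLp_eval g 1 (by simp)).integrable le_rfl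

lemma integrable_eval_sq {n : ℕ} (g : MvPolynomial (Fin n) ℝ) :
    Integrable (fun x => MvPolynomial.eval x g ^ 2) (gam n) :=
  (memLp_eval g 2 (by simp)).integrable_sq

lemma integrable_dir_sq {n : ℕ} (g : MvPolynomial (Fin n) ℝ) :
    Integrable (fun z : (Fin n → ℝ) × (Fin n → ℝ) => MvPolynomial.eval z.1 (dir z.2 g) ^ 2)
      ((gam n).prod (gam n)) := by
  have : MemLp (fun z : (Fin n → ℝ) × (Fin n → ℝ) => MvPolynomial.eval z.1 (dir z.2 g)) 2
      ((gam n).prod (gam n)) := by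
    simp only [eval_dir]
    refine memLp_finsetSum _ fun i _ => ?_
    refine memLp_mul_of_two_mul ?_ ?_
    · exact (memLp_coord n i (2 * 2) (by norm_num)).comp_measurePreserving measurePreserving_snd
    · exact (memLp_eval (MvPolynomial.pderiv i g) (2 * 2) (by norm_num)).comp_measurePreserving
        measurePreserving_fst
  exact this.integrable_sq

/-- `E |∇ g(X)|²`. -/
noncomputable def grad2 {n : ℕ} (g : MvPolynomial (Fin n) ℝ) : ℝ :=
  ∫ x, ∑ i, MvPolynomial.eval x (MvPolynomial.pderiv i g) ^ 2 ∂(gam n)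

lemma integral_dir_sq {n : ℕ} (g : MvPolynomial (Fin n) ℝ) :
    ∫ z : (Fin n → ℝ) × (Fin n → ℝ), MvPolynomial.eval z.1 (dir z.2 g) ^ 2
      ∂((gam n).prod (gam n)) = grad2 g := by
  rw [integral_prod _ (integrable_dir_sq g), grad2]
  congr 1
  ext x
  simp only [eval_dir]
  exact integral_linear_sq n _

/-- The quadratic form `y ↦ E ⟨∇ g(X), y⟩²`, as a polynomial in `y`. -/
noncomputable def qform {n : ℕ} (g : MvPolynomial (Fin n) ℝ) : MvPolynomial (Fin n) ℝ :=
  ∑ i, ∑ j, MvPolynomial.C (∫ x, MvPolynomial.eval x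
    (MvPolynomial.pderiv i g * MvPolynomial.pderiv j g) ∂(gam n)) *
      (MvPolynomial.X i * MvPolynomial.X j)

lemma eval_qform {n : ℕ} (g : MvPolynomial (Fin n) ℝ) (y : Fin n → ℝ) :
    MvPolynomial.eval y (qform g) = ∫ x, MvPolynomial.eval x (dir y g) ^ 2 ∂(gam n) := by
  have h : ∀ x, MvPolynomial.eval x (dir y g) ^ 2 = ∑ i, ∑ j, MvPolynomial.eval x
      (MvPolynomial.pderiv i g * MvPolynomial.pderiv j g) * (y i * y j) := fun x => by
    rw [eval_dir, sq, Finset.sum_mul_sum]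
    refine Finset.sum_congr rfl fun i _ => Finset.sum_congr rfl fun j _ => ?_
    simp; ring
  rw [integral_congr_ae (ae_of_all _ h), integral_finsetSum]
  · simp only [qform, map_sum]
    refine Finset.sum_congr rfl fun i _ => ?_
    rw [integral_finsetSum]
    · refine Finset.sum_congr rfl fun j _ => ?_
      rw [integral_mul_const]
      simp
    · exact fun j _ => (integrable_eval _).mul_const _
  · exact fun i _ => integrable_finsetSum _ fun j _ => (integrable_eval _).mul_const _

lemma totalDegree_qform {n : ℕ} (g : MvPolynomial (Fin n) ℝ) : (qform g).totalDegree ≤ 2 := by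
  refine MvPolynomial.totalDegree_finsetSum_le fun i _ =>
    MvPolynomial.totalDegree_finsetSum_le fun j _ => ?_
  refine (MvPolynomial.totalDegree_mul _ _).trans ?_
  have := MvPolynomial.totalDegree_mul (MvPolynomial.X i : MvPolynomial (Fin n) ℝ)
    (MvPolynomial.X j)
  simp only [MvPolynomial.totalDegree_X, MvPolynomial.totalDegree_C] at *
  omega

lemma eval_qform_nonneg {n : ℕ} (g : MvPolynomial (Fin n) ℝ) (y : Fin n → ℝ) :
    0 ≤ MvPolynomial.eval y (qform g) := by
  rw [eval_qform]; exact integral_nonneg fun _ => sq_nonneg _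

/-! ### Trigonometric polynomials -/

/-- `w` is a trigonometric polynomial of degree at most `d`, written as a polynomial of total
degree at most `d` in `cos θ` and `sin θ`. -/
def IsTrig (d : ℕ) (w : ℝ → ℝ) : Prop :=
  ∃ p : MvPolynomial (Fin 2) ℝ, p.totalDegree ≤ d ∧
    ∀ θ, w θ = MvPolynomial.eval ![Real.cos θ, Real.sin θ] p

lemma IsTrig.hasDerivAt {d : ℕ} {w : ℝ → ℝ} (hw : IsTrig d w) :
    ∃ w' : ℝ → ℝ, IsTrig d w' ∧ ∀ θ, HasDerivAt w (w' θ) θ := by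
  obtain ⟨p, hp, hw⟩ := hw
  have hw : w = fun θ => MvPolynomial.eval ![Real.cos θ, Real.sin θ] p := funext hw
  subst hw
  refine ⟨fun θ => MvPolynomial.eval ![Real.cos θ, Real.sin θ] (dir ![-Real.sin θ, Real.cos θ] p),
    ⟨MvPolynomial.X 0 * MvPolynomial.pderiv 1 p - MvPolynomial.X 1 * MvPolynomial.pderiv 0 p,
      ?_, fun θ => ?_⟩, fun θ => ?_⟩
  · by_cases hd : p.totalDegree = 0
    · rw [MvPolynomial.totalDegree_eq_zero_iff_eq_C] at hd
      rw [hd]; simp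
    · have h0 := totalDegree_pderiv_le 0 p
      have h1 := totalDegree_pderiv_le 1 p
      refine (MvPolynomial.totalDegree_sub _ _).trans (max_le ?_ ?_)
      · refine (MvPolynomial.totalDegree_mul _ _).trans ?_
        rw [MvPolynomial.totalDegree_X]; omega
      · refine (MvPolynomial.totalDegree_mul _ _).trans ?_
        rw [MvPolynomial.totalDegree_X]; omega
  · simp only [eval_dir]; simp; ring
  · refine hasDerivAt_eval p (fun t => ![Real.cos t, Real.sin t]) ![-Real.sin θ, Real.cos θ] θ ?_
    intro i
    fin_cases i
    · exact Real.hasDerivAt_cos θ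
    · exact Real.hasDerivAt_sin θ

lemma IsTrig.continuous {d : ℕ} {w : ℝ → ℝ} (hw : IsTrig d w) : Continuous w := by
  obtain ⟨w', -, h⟩ := hw.hasDerivAt
  exact continuous_iff_continuousAt.2 fun θ => (h θ).continuousAt

lemma IsTrig.sub_const {d : ℕ} {w : ℝ → ℝ} (hw : IsTrig d w) (m : ℝ) :
    IsTrig d (fun θ => w θ - m) := by
  obtain ⟨p, hp, h⟩ := hw
  refine ⟨p - MvPolynomial.C m, ?_, fun θ => by simp [h]⟩
  exact (MvPolynomial.totalDegree_sub _ _).trans (max_le hp (by simp))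

lemma isTrig_eval {n d : ℕ} (g : MvPolynomial (Fin n) ℝ) (hg : g.totalDegree ≤ d)
    (x y : Fin n → ℝ) :
    IsTrig d (fun θ => MvPolynomial.eval (Real.cos θ • x + Real.sin θ • y) g) := by
  refine ⟨MvPolynomial.bind₁ (fun i => MvPolynomial.X 0 * MvPolynomial.C (x i) +
    MvPolynomial.X 1 * MvPolynomial.C (y i)) g, ?_, fun θ => ?_⟩
  · refine (totalDegree_bind₁_le _ (fun i => ?_) g).trans hg
    refine (MvPolynomial.totalDegree_add _ _).trans (max_le ?_ ?_)
    · refine (MvPolynomial.totalDegree_mul _ _).trans ?_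
      rw [MvPolynomial.totalDegree_X, MvPolynomial.totalDegree_C]
    · refine (MvPolynomial.totalDegree_mul _ _).trans ?_
      rw [MvPolynomial.totalDegree_X, MvPolynomial.totalDegree_C]
  · simp only [← MvPolynomial.coe_aeval_eq_eval]
    simp only [RingHom.coe_coe, MvPolynomial.aeval_bind₁]
    congr 2
    ext i
    simp

/-- On the unit circle a trigonometric polynomial of degree `≤ d` is `z ^ (-d)` times an algebraic
polynomial of degree `≤ 2d` in `z = exp (iθ)`. -/
lemma IsTrig.exists_polynomial {d : ℕ} {w : ℝ → ℝ} (hw : IsTrig d w) :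
    ∃ P : Polynomial ℂ, P.natDegree ≤ 2 * d ∧
      ∀ θ : ℝ, (w θ : ℂ) * Complex.exp (θ * Complex.I) ^ d
        = P.eval (Complex.exp (θ * Complex.I)) := by
  obtain ⟨p, hp, hw⟩ := hw
  have hle : ∀ m ∈ p.support, m 0 + m 1 ≤ d := fun m hm => by
    have := (MvPolynomial.le_totalDegree hm).trans hp
    rwa [Finsupp.sum_fintype _ _ (fun _ => rfl), Fin.sum_univ_two] at this
  refine ⟨∑ m ∈ p.support, Polynomial.C ((p.coeff m : ℝ) : ℂ) * (Polynomial.X ^ (d - (m 0 + m 1)) *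
    ((Polynomial.X ^ 2 + Polynomial.C 1) * Polynomial.C (1 / 2)) ^ m 0 *
    ((Polynomial.X ^ 2 - Polynomial.C 1) * Polynomial.C (1 / (2 * Complex.I))) ^ m 1), ?_, ?_⟩
  · refine Polynomial.natDegree_sum_le_of_forall_le _ _ fun m hm => ?_
    have := hle m hm
    refine (Polynomial.natDegree_C_mul_le _ _).trans ?_
    have h1 : (((Polynomial.X ^ 2 + Polynomial.C 1) * Polynomial.C (1 / 2)) ^ m 0 :
        Polynomial ℂ).natDegree ≤ m 0 * 2 := by
      refine Polynomial.natDegree_pow_le_of_le _ ?_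
      refine (Polynomial.natDegree_mul_C_le _ _).trans ?_
      rw [Polynomial.natDegree_X_pow_add_C]
    have h2 : (((Polynomial.X ^ 2 - Polynomial.C 1) * Polynomial.C (1 / (2 * Complex.I))) ^ m 1 :
        Polynomial ℂ).natDegree ≤ m 1 * 2 := by
      refine Polynomial.natDegree_pow_le_of_le _ ?_
      refine (Polynomial.natDegree_mul_C_le _ _).trans ?_
      rw [Polynomial.natDegree_X_pow_sub_C]
    have h3 : (Polynomial.X ^ (d - (m 0 + m 1)) : Polynomial ℂ).natDegree ≤ d - (m 0 + m 1) := by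
      rw [Polynomial.natDegree_X_pow]
    have := Polynomial.natDegree_mul_le_of_le (Polynomial.natDegree_mul_le_of_le h3 h1) h2
    omega
  · intro θ
    set z := Complex.exp (θ * Complex.I) with hz
    have hz0 : z ≠ 0 := Complex.exp_ne_zero _
    have hzi : Complex.exp (-θ * Complex.I) = z⁻¹ := by
      rw [hz, ← Complex.exp_neg]; congr 1; ring
    have hcos : (Real.cos θ : ℂ) * z = (z ^ 2 + 1) * (1 / 2) := by
      rw [Complex.ofReal_cos, Complex.cos, ← hz, hzi]; field_simp
    have hsin : (Real.sin θ : ℂ) * z = (z ^ 2 - 1) * (1 / (2 * Complex.I)) := by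
      rw [Complex.ofReal_sin, Complex.sin, ← hz, hzi]
      have := Complex.I_ne_zero
      field_simp
      rw [Complex.I_sq]; ring
    rw [hw, MvPolynomial.eval_eq', Polynomial.eval_finsetSum]
    push_cast
    rw [Finset.sum_mul]
    refine Finset.sum_congr rfl fun m hm => ?_
    have := hle m hm
    simp only [Polynomial.eval_mul, Polynomial.eval_C, Polynomial.eval_pow, Polynomial.eval_X,
      Polynomial.eval_add, Polynomial.eval_sub]
    rw [← hcos, ← hsin]
    have hd : z ^ d = z ^ (d - (m 0 + m 1)) * z ^ m 0 * z ^ m 1 := by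
      rw [mul_assoc, ← pow_add, ← pow_add]; congr 1; omega
    rw [hd, Fin.prod_univ_two]
    simp only [Matrix.cons_val_zero, Matrix.cons_val_one, mul_pow]
    push_cast
    ring

lemma expI_injOn : Set.InjOn (fun θ : ℝ => Complex.exp (θ * Complex.I)) (Set.Icc 0 1) := by
  intro a ha b hb hab
  have h := Complex.exp_inj_of_neg_pi_lt_of_le_pi (x := a * Complex.I) (y := b * Complex.I)
    (by simp; linarith [Real.pi_gt_three, ha.1]) (by simp; linarith [Real.pi_gt_three, ha.2])
    (by simp; linarith [Real.pi_gt_three, hb.1]) (by simp; linarith [Real.pi_gt_three, hb.2]) hab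
  simpa using h

/-- A nonzero trigonometric polynomial of degree `≤ d` has at most `2d` zeros in `[0, 1]`. -/
lemma IsTrig.zeros {d : ℕ} {w : ℝ → ℝ} (hw : IsTrig d w) :
    (∀ θ, w θ = 0) ∨ ∃ Z : Finset ℝ, Z.card ≤ 2 * d ∧ ∀ θ ∈ Set.Icc (0 : ℝ) 1, w θ = 0 → θ ∈ Z := by
  obtain ⟨P, hP, h⟩ := hw.exists_polynomial
  by_cases h0 : P = 0
  · left
    intro θ
    have := h θ
    simpa [h0, Complex.exp_ne_zero] using this
  · right
    have hmaps : Set.MapsTo (fun θ : ℝ => Complex.exp (θ * Complex.I))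
        {θ | θ ∈ Set.Icc (0 : ℝ) 1 ∧ w θ = 0} (P.roots.toFinset : Set ℂ) := by
      rintro θ ⟨-, hθ⟩
      simp only [Finset.mem_coe, Multiset.mem_toFinset, Polynomial.mem_roots h0,
        Polynomial.IsRoot.def]
      rw [← h, hθ]; simp
    have hinj : Set.InjOn (fun θ : ℝ => Complex.exp (θ * Complex.I))
        {θ | θ ∈ Set.Icc (0 : ℝ) 1 ∧ w θ = 0} := expI_injOn.mono fun θ hθ => hθ.1
    have hfin := Set.Finite.of_injOn hmaps hinj (Finset.finite_toSet _)
    refine ⟨hfin.toFinset, ?_, fun θ hθ h' => by simpa using ⟨hθ, h'⟩⟩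
    calc hfin.toFinset.card ≤ P.roots.toFinset.card := by
          refine Finset.card_le_card_of_injOn (fun θ : ℝ => Complex.exp (θ * Complex.I)) ?_ ?_
          · simpa using hmaps
          · simpa using hinj
      _ ≤ P.roots.card := Multiset.toFinset_card_le _
      _ ≤ P.natDegree := P.card_roots'
      _ ≤ 2 * d := hP

/-- The nodes `j / (2d+1)`, `0 ≤ j ≤ 2d`, at which trigonometric polynomials of degree `d` are
sampled. -/
noncomputable def node (d j : ℕ) : ℝ := (j : ℝ) / (2 * d + 1)

/-- The sup norm of a trigonometric polynomial is controlled by its values at the nodes: this is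
Lagrange interpolation on the unit circle. -/
lemma exists_sup_bound (d : ℕ) : ∃ K : ℝ, 0 < K ∧ ∀ w : ℝ → ℝ, IsTrig d w →
    ∀ θ, |w θ| ≤ K * ∑ j ∈ Finset.range (2 * d + 1), |w (node d j)| := by
  classical
  let v : ℕ → ℂ := fun j => Complex.exp (node d j * Complex.I)
  have hv : Set.InjOn v (Finset.range (2 * d + 1)) := by
    intro i hi j hj hij
    simp only [Finset.coe_range, Set.mem_Iio] at hi hj
    have hpos : (0 : ℝ) < 2 * d + 1 := by positivity
    have hmem : ∀ k : ℕ, k < 2 * d + 1 → node d k ∈ Set.Icc (0 : ℝ) 1 := fun k hk => by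
      refine ⟨by unfold node; positivity, ?_⟩
      unfold node
      rw [div_le_one hpos]
      have : (k : ℝ) < ((2 * d + 1 : ℕ) : ℝ) := by exact_mod_cast hk
      push_cast at this; linarith
    have := expI_injOn (hmem i hi) (hmem j hj) hij
    unfold node at this
    rw [div_left_inj' hpos.ne'] at this
    exact_mod_cast this
  have hb : ∀ j, ∃ K : ℝ, 0 < K ∧ ∀ θ : ℝ,
      ‖(Lagrange.basis (Finset.range (2 * d + 1)) v j).eval (Complex.exp (θ * Complex.I))‖ ≤ K := by
    intro j
    have hc : Continuous (fun z : ℂ => (Lagrange.basis (Finset.range (2 * d + 1)) v j).eval z) :=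
      Polynomial.continuous _
    obtain ⟨K, hK⟩ := (isCompact_sphere (0 : ℂ) 1).exists_bound_of_continuousOn hc.continuousOn
    refine ⟨max K 1, by positivity, fun θ => (hK _ ?_).trans (le_max_left _ _)⟩
    simp [Complex.norm_exp_ofReal_mul_I]
  choose K hK0 hK using hb
  refine ⟨∑ j ∈ Finset.range (2 * d + 1), K j,
    Finset.sum_pos (fun j _ => hK0 j) ⟨0, by simp⟩, fun w hw θ => ?_⟩
  obtain ⟨P, hP, h⟩ := hw.exists_polynomial
  have hdeg : P.degree < (Finset.range (2 * d + 1)).card := by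
    rw [Finset.card_range]
    refine lt_of_le_of_lt Polynomial.degree_le_natDegree ?_
    exact_mod_cast Nat.lt_succ_of_le hP
  have hint := Lagrange.eq_interpolate hv hdeg
  have hn : ∀ θ : ℝ, |w θ| = ‖P.eval (Complex.exp (θ * Complex.I))‖ := fun θ => by
    rw [← h, norm_mul, norm_pow, Complex.norm_exp_ofReal_mul_I]; simp
  have he : P.eval (Complex.exp (θ * Complex.I)) = ∑ j ∈ Finset.range (2 * d + 1),
      P.eval (v j) *
        (Lagrange.basis (Finset.range (2 * d + 1)) v j).eval (Complex.exp (θ * Complex.I)) := by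
    conv_lhs => rw [hint]
    simp [Lagrange.interpolate_apply, Polynomial.eval_finsetSum]
  rw [hn, he, Finset.mul_sum]
  refine (norm_sum_le _ _).trans (Finset.sum_le_sum fun j hj => ?_)
  rw [norm_mul, hn (node d j), mul_comm]
  refine mul_le_mul_of_nonneg_right ((hK j θ).trans ?_) (norm_nonneg _)
  exact Finset.single_le_sum (f := K) (fun i _ => (hK0 i).le) hj

/-! ### Total variation and integration by parts along a circle -/

lemma sign_of_no_zero {w : ℝ → ℝ} (hw : Continuous w) {a b : ℝ}
    (h : ∀ t ∈ Set.Ioo a b, w t ≠ 0) :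
    (∀ t ∈ Set.Ioo a b, 0 ≤ w t) ∨ (∀ t ∈ Set.Ioo a b, w t ≤ 0) := by
  by_contra hcon
  push Not at hcon
  obtain ⟨⟨x, hx, hx0⟩, ⟨y, hy, hy0⟩⟩ := hcon
  obtain ⟨t, ht, h0⟩ := isPreconnected_Ioo.intermediate_value hx hy hw.continuousOn
    ⟨hx0.le, hy0.le⟩
  exact h t ht h0

/-- A function bounded by `M` whose derivative `c * w` vanishes with `w` only at the points of a
finite set is piecewise monotone, so its total variation is at most `2M` per piece. -/
lemma tv_finite {H c w : ℝ → ℝ} {M : ℝ} (hc : Continuous c) (hc0 : ∀ t, 0 ≤ c t)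
    (hw : Continuous w) (hH : ∀ t, HasDerivAt H (c t * w t) t) (hM : ∀ t, |H t| ≤ M)
    (Z : Finset ℝ) (N : ℕ) :
    ∀ a b : ℝ, a ≤ b → (∀ t ∈ Set.Ioo a b, w t = 0 → t ∈ Z) →
      (Z.filter (fun t => t ∈ Set.Ioo a b)).card = N →
      ∫ t in a..b, |c t * w t| ≤ (N + 1) * (2 * M) := by
  induction N using Nat.strong_induction_on with
  | _ N ih =>
    intro a b hab hZ hN
    have hM0 : 0 ≤ M := (abs_nonneg _).trans (hM 0)
    have hcont : Continuous (fun t => c t * w t) := hc.mul hw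
    by_cases hz : ∀ t ∈ Set.Ioo a b, w t ≠ 0
    · have hftc : ∫ t in a..b, c t * w t = H b - H a :=
        intervalIntegral.integral_eq_sub_of_hasDerivAt (fun t _ => hH t)
          (hcont.intervalIntegrable _ _)
      have hb := abs_le.1 (hM b)
      have ha := abs_le.1 (hM a)
      have hN0 : (0 : ℝ) ≤ N := Nat.cast_nonneg _
      have key : ∫ t in a..b, |c t * w t| ≤ 2 * M := by
        rcases sign_of_no_zero hw hz with hs | hs
        · have : ∫ t in a..b, |c t * w t| = ∫ t in a..b, c t * w t := by
            rw [intervalIntegral.integral_of_le hab, intervalIntegral.integral_of_le hab,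
              integral_Ioc_eq_integral_Ioo, integral_Ioc_eq_integral_Ioo]
            refine setIntegral_congr_fun measurableSet_Ioo fun t ht => ?_
            exact abs_of_nonneg (mul_nonneg (hc0 t) (hs t ht))
          rw [this, hftc]; linarith
        · have : ∫ t in a..b, |c t * w t| = ∫ t in a..b, -(c t * w t) := by
            rw [intervalIntegral.integral_of_le hab, intervalIntegral.integral_of_le hab,
              integral_Ioc_eq_integral_Ioo, integral_Ioc_eq_integral_Ioo]
            refine setIntegral_congr_fun measurableSet_Ioo fun t ht => ?_
            exact abs_of_nonpos (mul_nonpos_of_nonneg_of_nonpos (hc0 t) (hs t ht))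
          rw [this, intervalIntegral.integral_neg, hftc]; linarith
      nlinarith
    · push Not at hz
      obtain ⟨s, hs, hs0⟩ := hz
      have hsZ := hZ s hs hs0
      set Z1 := Z.filter (fun t => t ∈ Set.Ioo a s) with hZ1
      set Z2 := Z.filter (fun t => t ∈ Set.Ioo s b) with hZ2
      have hcard : Z1.card + Z2.card + 1 ≤ N := by
        have hdisj : Disjoint Z1 Z2 := by
          rw [Finset.disjoint_left]
          intro t h1 h2
          simp only [hZ1, hZ2, Finset.mem_filter, Set.mem_Ioo] at h1 h2
          linarith [h1.2.2, h2.2.1]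
        have hns : s ∉ Z1 ∪ Z2 := by
          simp [hZ1, hZ2]
        rw [← Finset.card_union_of_disjoint hdisj, ← Finset.card_insert_of_notMem hns, ← hN]
        refine Finset.card_le_card fun t ht => ?_
        simp only [hZ1, hZ2, Finset.mem_insert, Finset.mem_union, Finset.mem_filter,
          Set.mem_Ioo] at ht ⊢
        rcases ht with rfl | ⟨h1, h2, h3⟩ | ⟨h1, h2, h3⟩
        · exact ⟨hsZ, hs⟩
        · exact ⟨h1, h2, h3.trans hs.2⟩
        · exact ⟨h1, hs.1.trans h2, h3⟩
      have i1 := ih Z1.card (by omega) a s hs.1.le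
        (fun t ht => hZ t ⟨ht.1, ht.2.trans hs.2⟩) rfl
      have i2 := ih Z2.card (by omega) s b hs.2.le
        (fun t ht => hZ t ⟨hs.1.trans ht.1, ht.2⟩) rfl
      rw [← intervalIntegral.integral_add_adjacent_intervals
        (hcont.abs.intervalIntegrable a s) (hcont.abs.intervalIntegrable s b)]
      have : ((Z1.card : ℝ) + Z2.card + 1) ≤ N := by exact_mod_cast hcard
      nlinarith

lemma tv_bound {d : ℕ} {H c w : ℝ → ℝ} {M : ℝ} (hc : Continuous c) (hc0 : ∀ t, 0 ≤ c t)
    (hw : IsTrig d w) (hH : ∀ t, HasDerivAt H (c t * w t) t) (hM : ∀ t, |H t| ≤ M) :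
    ∫ t in (0 : ℝ)..1, |c t * w t| ≤ (2 * d + 1) * (2 * M) := by
  have hM0 : 0 ≤ M := (abs_nonneg _).trans (hM 0)
  rcases hw.zeros with h0 | ⟨Z, hZc, hZ⟩
  · simp only [h0]
    simp
    positivity
  · refine (tv_finite hc hc0 hw.continuous hH hM Z _ 0 1 zero_le_one
      (fun t ht => hZ t (Set.Ioo_subset_Icc_self ht)) rfl).trans ?_
    have h1 : (Z.filter (fun t => t ∈ Set.Ioo (0 : ℝ) 1)).card ≤ 2 * d :=
      (Finset.card_filter_le _ _).trans hZc
    have h2 : (((Z.filter (fun t => t ∈ Set.Ioo (0 : ℝ) 1)).card : ℕ) : ℝ) ≤ 2 * d := by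
      exact_mod_cast h1
    gcongr

lemma abs_div_sq_add_le (a δ : ℝ) (hδ : 0 < δ) : |a / (a ^ 2 + δ ^ 2)| ≤ 1 / (2 * δ) := by
  rw [abs_div, abs_of_pos (by positivity : 0 < a ^ 2 + δ ^ 2),
    div_le_div_iff₀ (by positivity) (by positivity), ← sq_abs a]
  nlinarith [sq_nonneg (|a| - δ)]

/-- The one-dimensional estimate. Writing `φ'(u) a² / (a² + δ²)` with `a = u'` as
`(φ ∘ u)' · a / (a² + δ²)` and integrating by parts, the derivative of the second factor
has total mass `O(1 / δ)`; the weight `q / (q + T)` only adds another bounded variation factor. -/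
lemma ibp_circle {d : ℕ} {φ φ' u a q : ℝ → ℝ} {T δ S : ℝ}
    (hφ : ∀ x, HasDerivAt φ (φ' x) x) (hφc : Continuous φ')
    (hu : ∀ t, HasDerivAt u (a t) t) (ha : IsTrig d a) (hq : IsTrig 2 q)
    (hq0 : ∀ t, 0 ≤ q t) (hT : 0 ≤ T) (hqT : ∀ t, 0 < q t + T) (hδ : 0 < δ)
    (hS : ∀ t, |φ (u t)| ≤ S) :
    ∫ t in (0 : ℝ)..1, φ' (u t) * (q t / (q t + T) * (a t ^ 2 / (a t ^ 2 + δ ^ 2)))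
      ≤ S * ((8 * d + 10) / δ) := by
  obtain ⟨a', ha', hda⟩ := ha.hasDerivAt
  obtain ⟨q', hq', hdq⟩ := hq.hasDerivAt
  have hac := ha.continuous
  have hqc := hq.continuous
  have hac' := ha'.continuous
  have hqc' := hq'.continuous
  have huc : Continuous u := continuous_iff_continuousAt.2 fun t => (hu t).continuousAt
  have hφcont : Continuous φ := continuous_iff_continuousAt.2 fun t => (hφ t).continuousAt
  have hS0 : 0 ≤ S := (abs_nonneg _).trans (hS 0)
  have hD : ∀ t, a t ^ 2 + δ ^ 2 ≠ 0 := fun t => by positivity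
  have hE : ∀ t, q t + T ≠ 0 := fun t => ne_of_gt (hqT t)
  -- `W` is the weight, `G = a / (a² + δ²)`, and `F = W * G` is the factor paired with `(φ ∘ u)'`
  set W : ℝ → ℝ := fun t => q t / (q t + T) with hWdef
  set W' : ℝ → ℝ := fun t => T / (q t + T) ^ 2 * q' t with hW'def
  set G : ℝ → ℝ := fun t => a t / (a t ^ 2 + δ ^ 2) with hGdef
  set G' : ℝ → ℝ := fun t => a' t * (δ ^ 2 - a t ^ 2) / (a t ^ 2 + δ ^ 2) ^ 2 with hG'def
  have hW : ∀ t, HasDerivAt W (W' t) t := fun t => by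
    refine ((hdq t).div ((hdq t).add_const T) (hE t)).congr_deriv ?_
    simp only [hW'def]
    have := hE t
    field_simp
    ring
  have hG : ∀ t, HasDerivAt G (G' t) t := fun t => by
    refine ((hda t).div (((hda t).pow 2).add_const (δ ^ 2)) (hD t)).congr_deriv ?_
    simp only [hG'def]
    congr 1
    simp only [Nat.cast_ofNat, Pi.pow_apply]
    ring
  have hWc : Continuous W' :=
    (continuous_const.div ((hqc.add continuous_const).pow 2) fun t => pow_ne_zero _ (hE t)).mul hqc'
  have hGc : Continuous G' :=
    (hac'.mul (continuous_const.sub (hac.pow 2))).div (((hac.pow 2).add continuous_const).pow 2)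
      fun t => pow_ne_zero _ (hD t)
  have hW01 : ∀ t, |W t| ≤ 1 := fun t => by
    simp only [hWdef]
    rw [abs_of_nonneg (div_nonneg (hq0 t) (hqT t).le), div_le_one (hqT t)]
    linarith
  have hGb : ∀ t, |G t| ≤ 1 / (2 * δ) := fun t => abs_div_sq_add_le _ _ hδ
  have hWcont : Continuous W := continuous_iff_continuousAt.2 fun t => (hW t).continuousAt
  have hGcont : Continuous G := continuous_iff_continuousAt.2 fun t => (hG t).continuousAt
  have hF : ∀ t, HasDerivAt (fun t => W t * G t) (W' t * G t + W t * G' t) t := fun t =>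
    (hW t).mul (hG t)
  have hFc : Continuous (fun t => W' t * G t + W t * G' t) :=
    (hWc.mul hGcont).add (hWcont.mul hGc)
  have hcomp : ∀ t, HasDerivAt (fun t => φ (u t)) (φ' (u t) * a t) t := fun t =>
    (hφ (u t)).comp t (hu t)
  have hparts := intervalIntegral.integral_mul_deriv_eq_deriv_mul (a := 0) (b := 1)
    (fun t _ => hF t) (fun t _ => hcomp t)
    (hFc.intervalIntegrable _ _) (((hφc.comp huc).mul hac).intervalIntegrable _ _)
  have hlhs : ∫ t in (0 : ℝ)..1, φ' (u t) * (q t / (q t + T) * (a t ^ 2 / (a t ^ 2 + δ ^ 2)))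
      = ∫ t in (0 : ℝ)..1, W t * G t * (φ' (u t) * a t) := by
    congr 1; ext t; simp only [hWdef, hGdef]; ring
  rw [hlhs, hparts]
  have hvW : ∫ t in (0 : ℝ)..1, |W' t| ≤ 10 := by
    have := tv_bound (d := 2) (H := W) (c := fun t => T / (q t + T) ^ 2) (w := q') (M := 1)
      (continuous_const.div ((hqc.add continuous_const).pow 2) fun t => pow_ne_zero _ (hE t))
      (fun t => by positivity) hq' hW hW01
    refine this.trans ?_
    norm_num
  have hvG : ∫ t in (0 : ℝ)..1, |1 / (a t ^ 2 + δ ^ 2) * a' t| ≤ (2 * d + 1) * (2 * (2 / δ)) := by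
    refine tv_bound (H := fun t => Real.arctan (a t / δ) / δ)
      (continuous_const.div ((hac.pow 2).add continuous_const) hD)
      (fun t => by positivity) ha' (fun t => ?_) (fun t => ?_)
    · refine ((((hda t).div_const δ).arctan).div_const δ).congr_deriv ?_
      have := hD t
      have h2 : (1 : ℝ) + (a t / δ) ^ 2 ≠ 0 := by positivity
      field_simp
      ring
    · rw [abs_div, abs_of_pos hδ]
      have h1 := Real.arctan_lt_pi_div_two (a t / δ)
      have h2 := Real.neg_pi_div_two_lt_arctan (a t / δ)
      have : |Real.arctan (a t / δ)| ≤ 2 := by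
        rw [abs_le]; constructor <;> linarith [Real.pi_lt_four]
      gcongr
  have hpt : ∀ t, |W' t * G t + W t * G' t| ≤
      |W' t| * (1 / (2 * δ)) + |1 / (a t ^ 2 + δ ^ 2) * a' t| := fun t => by
    refine (abs_add_le _ _).trans ?_
    rw [abs_mul (W' t), abs_mul (W t)]
    refine add_le_add (mul_le_mul_of_nonneg_left (hGb t) (abs_nonneg _)) ?_
    have h1 : |G' t| ≤ |1 / (a t ^ 2 + δ ^ 2) * a' t| := by
      have hpos : 0 < a t ^ 2 + δ ^ 2 := by positivity
      have e1 : G' t = (1 / (a t ^ 2 + δ ^ 2) * a' t) *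
          ((δ ^ 2 - a t ^ 2) / (a t ^ 2 + δ ^ 2)) := by
        simp only [hG'def]; field_simp
      rw [e1, abs_mul]
      refine mul_le_of_le_one_right (abs_nonneg _) ?_
      rw [abs_div, abs_of_pos hpos, div_le_one hpos, abs_le]
      constructor <;> nlinarith [sq_nonneg (a t), sq_nonneg δ]
    calc |W t| * |G' t| ≤ 1 * |G' t| := mul_le_mul_of_nonneg_right (hW01 t) (abs_nonneg _)
      _ ≤ _ := by rw [one_mul]; exact h1
  have hFb : ∀ t, |W t * G t| ≤ 1 / (2 * δ) := fun t => by
    rw [abs_mul]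
    calc |W t| * |G t| ≤ 1 * (1 / (2 * δ)) :=
          mul_le_mul (hW01 t) (hGb t) (abs_nonneg _) zero_le_one
      _ = _ := one_mul _
  have hbd : ∀ t, |W t * G t * φ (u t)| ≤ 1 / (2 * δ) * S := fun t => by
    rw [abs_mul]
    exact mul_le_mul (hFb t) (hS t) (abs_nonneg _) (by positivity)
  have hcA : Continuous (fun t => |W' t| * (1 / (2 * δ))) := hWc.abs.mul continuous_const
  have hcB : Continuous (fun t => |1 / (a t ^ 2 + δ ^ 2) * a' t|) :=
    ((continuous_const.div ((hac.pow 2).add continuous_const) hD).mul hac').abs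
  have hint : |∫ t in (0 : ℝ)..1, (W' t * G t + W t * G' t) * φ (u t)| ≤
      (10 * (1 / (2 * δ)) + (2 * d + 1) * (2 * (2 / δ))) * S := by
    refine (intervalIntegral.abs_integral_le_integral_abs zero_le_one).trans ?_
    calc ∫ t in (0 : ℝ)..1, |(W' t * G t + W t * G' t) * φ (u t)|
        ≤ ∫ t in (0 : ℝ)..1, (|W' t| * (1 / (2 * δ)) + |1 / (a t ^ 2 + δ ^ 2) * a' t|) * S := by
          refine intervalIntegral.integral_mono_on zero_le_one
            ((hFc.mul (hφcont.comp huc)).abs.intervalIntegrable _ _)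
            (((hcA.add hcB).mul continuous_const).intervalIntegrable _ _) fun t _ => ?_
          rw [abs_mul]
          exact mul_le_mul (hpt t) (hS t) (abs_nonneg _) (by positivity)
      _ = ((∫ t in (0 : ℝ)..1, |W' t|) * (1 / (2 * δ)) +
            ∫ t in (0 : ℝ)..1, |1 / (a t ^ 2 + δ ^ 2) * a' t|) * S := by
          rw [intervalIntegral.integral_mul_const, intervalIntegral.integral_add
            (hcA.intervalIntegrable _ _) (hcB.intervalIntegrable _ _),
            intervalIntegral.integral_mul_const]
      _ ≤ _ := by gcongr
  have h1 := abs_le.1 (hbd 1)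
  have h0 := abs_le.1 (hbd 0)
  have hi := abs_le.1 hint
  have e : S * ((8 * d + 10) / δ) = 1 / (2 * δ) * S + 1 / (2 * δ) * S +
      (10 * (1 / (2 * δ)) + (2 * d + 1) * (2 * (2 / δ))) * S := by
    field_simp; ring
  rw [e]
  linarith [h1.2, h0.1, hi.1]

/-! ### Averaging over rotations -/

lemma continuous_rotation (n : ℕ) : Continuous (fun p : ℝ × ((Fin n → ℝ) × (Fin n → ℝ)) =>
    ContinuousLinearMap.rotation (E := Fin n → ℝ) p.1 p.2) := by
  simp only [ContinuousLinearMap.rotation_apply]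
  fun_prop

/-- Averaging over an interval of rotations does not change an expectation over two independent
standard Gaussian vectors. -/
lemma rot_fubini {n : ℕ} (F : (Fin n → ℝ) × (Fin n → ℝ) → ℝ) (hF : Continuous F)
    (hi : Integrable F ((gam n).prod (gam n))) {L : ℝ} (hL : 0 ≤ L) :
    Integrable (fun z => ∫ θ in (0 : ℝ)..L, F (ContinuousLinearMap.rotation θ z))
      ((gam n).prod (gam n)) ∧
    ∫ z, (∫ θ in (0 : ℝ)..L, F (ContinuousLinearMap.rotation θ z)) ∂((gam n).prod (gam n))
      = L * ∫ z, F z ∂((gam n).prod (gam n)) := by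
  have hrot : ∀ (G : (Fin n → ℝ) × (Fin n → ℝ) → ℝ), Continuous G → ∀ θ : ℝ,
      ∫ z, G (ContinuousLinearMap.rotation θ z) ∂((gam n).prod (gam n))
      = ∫ z, G z ∂((gam n).prod (gam n)) := fun G hG θ => by
    have h := integral_map (μ := (gam n).prod (gam n))
      (φ := ContinuousLinearMap.rotation (E := Fin n → ℝ) θ) (f := G)
      (rotation_mp n θ).measurable.aemeasurable hG.aestronglyMeasurable
    rw [← h, (rotation_mp n θ).map_eq]
  have hc : Continuous (fun p : ℝ × ((Fin n → ℝ) × (Fin n → ℝ)) =>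
      F (ContinuousLinearMap.rotation p.1 p.2)) := hF.comp (continuous_rotation n)
  have hint : Integrable (fun p : ℝ × ((Fin n → ℝ) × (Fin n → ℝ)) =>
      F (ContinuousLinearMap.rotation p.1 p.2))
      ((volume.restrict (Set.Ioc 0 L)).prod ((gam n).prod (gam n))) := by
    rw [integrable_prod_iff hc.aestronglyMeasurable]
    refine ⟨ae_of_all _ fun θ => (rotation_mp n θ).integrable_comp_of_integrable hi, ?_⟩
    have : ∀ θ : ℝ, ∫ z, ‖F (ContinuousLinearMap.rotation θ z)‖ ∂((gam n).prod (gam n))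
      = ∫ z, ‖F z‖ ∂((gam n).prod (gam n)) := hrot _ hF.norm
    simp only [this]
    exact integrable_const _
  simp only [intervalIntegral.integral_of_le hL]
  refine ⟨hint.integral_prod_right, ?_⟩
  rw [integral_integral_swap (f := fun z θ => F (ContinuousLinearMap.rotation θ z)) hint.swap]
  simp only [hrot F hF]
  simp [hL]

lemma hasDerivAt_circle {n : ℕ} (g : MvPolynomial (Fin n) ℝ)
    (z : (Fin n → ℝ) × (Fin n → ℝ)) (θ : ℝ) :
    HasDerivAt (fun t => MvPolynomial.eval (ContinuousLinearMap.rotation t z).1 g)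
      (MvPolynomial.eval (ContinuousLinearMap.rotation θ z).1
        (dir (ContinuousLinearMap.rotation θ z).2 g)) θ := by
  refine hasDerivAt_eval g (fun t => (ContinuousLinearMap.rotation t z).1) _ θ fun i => ?_
  simp only [ContinuousLinearMap.rotation_apply, Pi.add_apply, Pi.smul_apply, smul_eq_mul]
  exact ((Real.hasDerivAt_cos θ).mul_const _).add ((Real.hasDerivAt_sin θ).mul_const _)

lemma variance_eval {n : ℕ} (g : MvPolynomial (Fin n) ℝ) :
    variance (fun x => MvPolynomial.eval x g) (gam n)
      = ∫ x, MvPolynomial.eval x g ^ 2 ∂(gam n) - (∫ x, MvPolynomial.eval x g ∂(gam n)) ^ 2 := by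
  rw [variance_eq_sub (memLp_eval g 2 (by simp))]; rfl

lemma sq_integral_le {a : ℝ → ℝ} (ha : Continuous a) {L : ℝ} (hL : 0 < L) :
    (∫ θ in (0 : ℝ)..L, a θ) ^ 2 ≤ L * ∫ θ in (0 : ℝ)..L, a θ ^ 2 := by
  set I := ∫ θ in (0 : ℝ)..L, a θ with hI
  have h0 : 0 ≤ ∫ θ in (0 : ℝ)..L, (a θ - I / L) ^ 2 :=
    intervalIntegral.integral_nonneg hL.le fun θ _ => sq_nonneg _
  have h1 : ∫ θ in (0 : ℝ)..L, (a θ - I / L) ^ 2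
      = (∫ θ in (0 : ℝ)..L, a θ ^ 2) - 2 * (I / L) * I + L * (I / L) ^ 2 := by
    have : ∀ θ, (a θ - I / L) ^ 2 = a θ ^ 2 - 2 * (I / L) * a θ + (I / L) ^ 2 := fun θ => by ring
    simp only [this]
    rw [intervalIntegral.integral_add, intervalIntegral.integral_sub,
      intervalIntegral.integral_const_mul, ← hI]
    · simp
    all_goals exact Continuous.intervalIntegrable (by fun_prop) _ _
  rw [h1] at h0
  have h2 : L * (∫ θ in (0 : ℝ)..L, a θ ^ 2) - I ^ 2
      = L * ((∫ θ in (0 : ℝ)..L, a θ ^ 2) - 2 * (I / L) * I + L * (I / L) ^ 2) := by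
    field_simp; ring
  have := mul_nonneg hL.le h0
  linarith

/-- The Gaussian Poincaré inequality, with a non-optimal constant. The path
`cos θ X + sin θ Y` joins `X` to an independent copy `Y` of it. -/
lemma poincare {n : ℕ} (g : MvPolynomial (Fin n) ℝ) :
    variance (fun x => MvPolynomial.eval x g) (gam n) ≤ 2 * grad2 g := by
  have hL : 0 < Real.pi / 2 := by positivity
  have hca : Continuous (fun z : (Fin n → ℝ) × (Fin n → ℝ) =>
    MvPolynomial.eval z.1 (dir z.2 g)) := continuous_eval_dir g
  obtain ⟨h1, h2⟩ := rot_fubini (fun z => MvPolynomial.eval z.1 (dir z.2 g) ^ 2) (hca.pow 2)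
    (integrable_dir_sq g) hL.le
  rw [integral_dir_sq] at h2
  have hpt : ∀ z : (Fin n → ℝ) × (Fin n → ℝ),
      (MvPolynomial.eval z.2 g - MvPolynomial.eval z.1 g) ^ 2 ≤ Real.pi / 2 *
        ∫ θ in (0 : ℝ)..(Real.pi / 2), MvPolynomial.eval (ContinuousLinearMap.rotation θ z).1
        (dir (ContinuousLinearMap.rotation θ z).2 g) ^ 2 := fun z => by
    have hc : Continuous (fun θ : ℝ => MvPolynomial.eval (ContinuousLinearMap.rotation θ z).1
        (dir (ContinuousLinearMap.rotation θ z).2 g)) := by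
      have hr : Continuous fun θ : ℝ => ContinuousLinearMap.rotation (E := Fin n → ℝ) θ z := by
        simp only [ContinuousLinearMap.rotation_apply]
        fun_prop
      exact hca.comp hr
    have h := intervalIntegral.integral_eq_sub_of_hasDerivAt (a := 0) (b := Real.pi / 2)
      (fun θ _ => hasDerivAt_circle g z θ) (hc.intervalIntegrable _ _)
    have h3 := sq_integral_le hc hL
    rw [h] at h3
    simpa [ContinuousLinearMap.rotation_apply] using h3
  have hi1 : Integrable (fun z : (Fin n → ℝ) × (Fin n → ℝ) => MvPolynomial.eval z.1 g ^ 2)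
      ((gam n).prod (gam n)) :=
    measurePreserving_fst.integrable_comp_of_integrable (integrable_eval_sq g)
  have hi2 : Integrable (fun z : (Fin n → ℝ) × (Fin n → ℝ) => MvPolynomial.eval z.2 g ^ 2)
      ((gam n).prod (gam n)) :=
    measurePreserving_snd.integrable_comp_of_integrable (integrable_eval_sq g)
  have hi3 : Integrable (fun z : (Fin n → ℝ) × (Fin n → ℝ) =>
      MvPolynomial.eval z.1 g * MvPolynomial.eval z.2 g) ((gam n).prod (gam n)) :=
    (integrable_eval g).mul_prod (integrable_eval g)
  have e : ∀ z : (Fin n → ℝ) × (Fin n → ℝ),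
      (MvPolynomial.eval z.2 g - MvPolynomial.eval z.1 g) ^ 2
      = MvPolynomial.eval z.2 g ^ 2 + MvPolynomial.eval z.1 g ^ 2
        - 2 * (MvPolynomial.eval z.1 g * MvPolynomial.eval z.2 g) := fun z => by ring
  have hlhs : ∫ z : (Fin n → ℝ) × (Fin n → ℝ),
      (MvPolynomial.eval z.2 g - MvPolynomial.eval z.1 g) ^ 2 ∂((gam n).prod (gam n))
      = 2 * variance (fun x => MvPolynomial.eval x g) (gam n) := by
    simp only [e]
    have hi12 : Integrable (fun z : (Fin n → ℝ) × (Fin n → ℝ) =>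
        MvPolynomial.eval z.2 g ^ 2 + MvPolynomial.eval z.1 g ^ 2) ((gam n).prod (gam n)) :=
      hi2.add hi1
    rw [integral_sub hi12 (hi3.const_mul 2), integral_add hi2 hi1, integral_const_mul,
      integral_prod_mul (μ := gam n) (ν := gam n) (fun x => MvPolynomial.eval x g)
        (fun x => MvPolynomial.eval x g), variance_eval]
    have f1 := integral_fun_fst (μ := gam n) (ν := gam n) (fun x => MvPolynomial.eval x g ^ 2)
    have f2 := integral_fun_snd (μ := gam n) (ν := gam n) (fun x => MvPolynomial.eval x g ^ 2)
    simp only [probReal_univ, one_smul] at f1 f2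
    rw [f1, f2]; ring
  have hmono := integral_mono (by simp only [e]; exact (hi2.add hi1).sub (hi3.const_mul 2))
    (h1.const_mul (Real.pi / 2)) hpt
  rw [hlhs, integral_const_mul, h2] at hmono
  have hg0 : 0 ≤ grad2 g := integral_nonneg fun x => Finset.sum_nonneg fun i _ => sq_nonneg _
  have hpi : Real.pi / 2 * (Real.pi / 2) ≤ 4 := by nlinarith [Real.pi_lt_four, Real.pi_pos]
  nlinarith

lemma integral_abs_le_sqrt {α : Type*} [MeasurableSpace α] {μ : Measure α}
    [IsProbabilityMeasure μ] {f : α → ℝ} (hf : MemLp f 2 μ) :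
    ∫ x, |f x| ∂μ ≤ Real.sqrt (∫ x, f x ^ 2 ∂μ) := by
  have h := variance_nonneg (fun x => |f x|) μ
  rw [variance_eq_sub (by simpa using hf.norm)] at h
  refine Real.le_sqrt_of_sq_le ?_
  have e : ∫ x, f x ^ 2 ∂μ = μ[(fun x => |f x|) ^ 2] := by simp
  rw [e]; linarith

lemma integral_abs_sub_mean {n : ℕ} (g : MvPolynomial (Fin n) ℝ) (θ : ℝ) :
    Integrable (fun z : (Fin n → ℝ) × (Fin n → ℝ) =>
      |MvPolynomial.eval (ContinuousLinearMap.rotation θ z).1 g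
        - ∫ x, MvPolynomial.eval x g ∂(gam n)|) ((gam n).prod (gam n)) ∧
    ∫ z : (Fin n → ℝ) × (Fin n → ℝ), |MvPolynomial.eval (ContinuousLinearMap.rotation θ z).1 g
        - ∫ x, MvPolynomial.eval x g ∂(gam n)| ∂((gam n).prod (gam n))
      ≤ Real.sqrt (variance (fun x => MvPolynomial.eval x g) (gam n)) := by
  set m := ∫ x, MvPolynomial.eval x g ∂(gam n) with hm
  have hmp : MeasurePreserving (fun z : (Fin n → ℝ) × (Fin n → ℝ) =>
      (ContinuousLinearMap.rotation θ z).1) ((gam n).prod (gam n)) (gam n) :=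
    measurePreserving_fst.comp (rotation_mp n θ)
  have hL : MemLp (fun x => MvPolynomial.eval x g - m) 2 (gam n) :=
    (memLp_eval g 2 (by simp)).sub (memLp_const m)
  have hc : Continuous (fun x => |MvPolynomial.eval x g - m|) :=
    ((MvPolynomial.continuous_eval g).sub continuous_const).abs
  refine ⟨hmp.integrable_comp_of_integrable (g := fun x => |MvPolynomial.eval x g - m|)
    ((hL.integrable (by norm_num)).abs), ?_⟩
  have h := integral_map (μ := (gam n).prod (gam n)) hmp.measurable.aemeasurable
    (f := fun x => |MvPolynomial.eval x g - m|) hc.aestronglyMeasurable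
  rw [hmp.map_eq] at h
  rw [← h, variance_eq_integral (MvPolynomial.continuous_eval g).measurable.aemeasurable]
  exact integral_abs_le_sqrt hL

/-! ### Integration by parts in expectation -/

/-- Average of `ibp_circle` over two independent standard Gaussian vectors. The constant depends on
`d` only; in particular it does not depend on the bound `B` for `φ'`, which serves integrability. -/
lemma ibp_expect (d : ℕ) : ∃ C : ℝ, 0 < C ∧ ∀ (n : ℕ) (g q : MvPolynomial (Fin n) ℝ),
    g.totalDegree ≤ d → q.totalDegree ≤ 2 → (∀ y, 0 ≤ MvPolynomial.eval y q) →
    ∀ T : ℝ, 0 ≤ T → (∀ y, 0 < MvPolynomial.eval y q + T) → ∀ δ : ℝ, 0 < δ →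
    ∀ σ : ℝ, 0 < σ → σ = Real.sqrt (variance (fun x => MvPolynomial.eval x g) (gam n)) →
    ∀ (φ φ' : ℝ → ℝ) (A B : ℝ), (∀ x, HasDerivAt φ (φ' x) x) → Continuous φ' → 0 ≤ A →
    (∀ x, |φ x| ≤ A * (1 + |x - ∫ x, MvPolynomial.eval x g ∂(gam n)| / σ)) →
    (∀ x, |φ' x| ≤ B) →
    ∫ z : (Fin n → ℝ) × (Fin n → ℝ), φ' (MvPolynomial.eval z.1 g) *
      (MvPolynomial.eval z.2 q / (MvPolynomial.eval z.2 q + T) *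
        (MvPolynomial.eval z.1 (dir z.2 g) ^ 2 / (MvPolynomial.eval z.1 (dir z.2 g) ^ 2 + δ ^ 2)))
      ∂((gam n).prod (gam n)) ≤ C * A / δ := by
  obtain ⟨K, hK, hsup⟩ := exists_sup_bound d
  refine ⟨(1 + K * (2 * d + 1)) * (8 * d + 10), by positivity, ?_⟩
  intro n g q hg hq hq0 T hT hqT δ hδ σ hσ hσe φ φ' A B hφ hφc hA hφA hB
  set m := ∫ x, MvPolynomial.eval x g ∂(gam n) with hm
  let F : (Fin n → ℝ) × (Fin n → ℝ) → ℝ := fun z => φ' (MvPolynomial.eval z.1 g) *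
      (MvPolynomial.eval z.2 q / (MvPolynomial.eval z.2 q + T) *
        (MvPolynomial.eval z.1 (dir z.2 g) ^ 2 / (MvPolynomial.eval z.1 (dir z.2 g) ^ 2 + δ ^ 2)))
  have hq2 : Continuous (fun z : (Fin n → ℝ) × (Fin n → ℝ) => MvPolynomial.eval z.2 q) :=
    (MvPolynomial.continuous_eval q).comp continuous_snd
  have hFc : Continuous F := by
    refine (hφc.comp ((MvPolynomial.continuous_eval g).comp continuous_fst)).mul
      (Continuous.mul ?_ ?_)
    · exact hq2.div (hq2.add continuous_const) fun z => (hqT _).ne'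
    · exact ((continuous_eval_dir g).pow 2).div
        (((continuous_eval_dir g).pow 2).add continuous_const) fun z => by positivity
  have hFb : ∀ z, ‖F z‖ ≤ B := fun z => by
    simp only [F, Real.norm_eq_abs, abs_mul]
    have h1 : |MvPolynomial.eval z.2 q / (MvPolynomial.eval z.2 q + T)| ≤ 1 := by
      rw [abs_of_nonneg (div_nonneg (hq0 _) (hqT _).le), div_le_one (hqT _)]; linarith
    have h2 : |MvPolynomial.eval z.1 (dir z.2 g) ^ 2 /
        (MvPolynomial.eval z.1 (dir z.2 g) ^ 2 + δ ^ 2)| ≤ 1 := by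
      rw [abs_of_nonneg (by positivity), div_le_one (by positivity)]; nlinarith
    calc _ ≤ B * (1 * 1) := mul_le_mul (hB _) (mul_le_mul h1 h2 (abs_nonneg _) zero_le_one)
          (by positivity) ((abs_nonneg _).trans (hB 0))
      _ = B := by ring
  have hFi : Integrable F ((gam n).prod (gam n)) :=
    Integrable.of_bound hFc.aestronglyMeasurable B (ae_of_all _ hFb)
  obtain ⟨h1, h2⟩ := rot_fubini F hFc hFi zero_le_one
  rw [one_mul] at h2
  let R : (Fin n → ℝ) × (Fin n → ℝ) → ℝ := fun z => ∑ j ∈ Finset.range (2 * d + 1),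
    |MvPolynomial.eval (ContinuousLinearMap.rotation (node d j) z).1 g - m|
  have hRi : Integrable R ((gam n).prod (gam n)) :=
    integrable_finsetSum _ fun j _ => (integral_abs_sub_mean g _).1
  have hR : ∫ z, R z ∂((gam n).prod (gam n)) ≤ (2 * d + 1) * σ := by
    simp only [R]
    rw [integral_finsetSum _ fun j _ => (integral_abs_sub_mean g _).1]
    refine (Finset.sum_le_card_nsmul _ _ σ fun j _ => ?_).trans (by simp)
    rw [hσe]; exact (integral_abs_sub_mean g _).2
  have hpt : ∀ z, ∫ θ in (0 : ℝ)..1, F (ContinuousLinearMap.rotation θ z) ≤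
      A * (1 + K * R z / σ) * ((8 * d + 10) / δ) := fun z => by
    have htrig : IsTrig d (fun θ => MvPolynomial.eval (ContinuousLinearMap.rotation θ z).1 g) := by
      simpa [ContinuousLinearMap.rotation_apply] using isTrig_eval g hg z.1 z.2
    have hqtrig : IsTrig 2
        (fun θ => MvPolynomial.eval (ContinuousLinearMap.rotation θ z).2 q) := by
      have := isTrig_eval q hq z.2 (-z.1)
      convert this using 3 with θ
      simp [ContinuousLinearMap.rotation_apply, add_comm]
    obtain ⟨u', hu', hdu⟩ := htrig.hasDerivAt
    have hu'e : u' = fun θ => MvPolynomial.eval (ContinuousLinearMap.rotation θ z).1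
        (dir (ContinuousLinearMap.rotation θ z).2 g) :=
      funext fun θ => (hdu θ).unique (hasDerivAt_circle g z θ)
    rw [hu'e] at hu'
    refine ibp_circle hφ hφc (hasDerivAt_circle g z) hu' hqtrig (fun t => hq0 _) hT
      (fun t => hqT _) hδ fun t => ?_
    refine (hφA _).trans ?_
    have := hsup _ (htrig.sub_const m) t
    gcongr
  have hmono := integral_mono h1 ((((integrable_const (1 : ℝ)).add ((hRi.const_mul K).div_const σ)).const_mul
    A).mul_const ((8 * d + 10) / δ)) hpt
  rw [h2, integral_mul_const, integral_const_mul, integral_add' (integrable_const _)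
    ((hRi.const_mul K).div_const σ), integral_div, integral_const_mul] at hmono
  refine hmono.trans ?_
  simp only [integral_const, probReal_univ, one_smul]
  have h3 : K * (∫ z, R z ∂((gam n).prod (gam n))) / σ ≤ K * (2 * d + 1) := by
    rw [div_le_iff₀ hσ, mul_assoc]
    exact mul_le_mul_of_nonneg_left hR hK.le
  calc A * (1 + K * (∫ z, R z ∂((gam n).prod (gam n))) / σ) * ((8 * d + 10) / δ)
      ≤ A * (1 + K * (2 * d + 1)) * ((8 * d + 10) / δ) := by gcongr
    _ = _ := by ring

/-! ### The weight -/

lemma grad2_nonneg {n : ℕ} (g : MvPolynomial (Fin n) ℝ) : 0 ≤ grad2 g :=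
  integral_nonneg fun _ => Finset.sum_nonneg fun _ _ => sq_nonneg _

lemma harmonic_le {p s Q T : ℝ} (hp : 0 ≤ p) (hs : 0 ≤ s) (hQT : 0 < Q + T) :
    p * (s / (s + p)) ≤ p * (Q / (Q + T)) ^ 2 + s * (T / (Q + T)) ^ 2 := by
  rcases hp.eq_or_lt with rfl | hp
  · simp; positivity
  have h1 : 0 < s + p := by linarith
  have h : p * (Q / (Q + T)) ^ 2 + s * (T / (Q + T)) ^ 2 - p * (s / (s + p))
      = (p * Q - s * T) ^ 2 / ((Q + T) ^ 2 * (s + p)) := by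
    field_simp; ring
  have : 0 ≤ (p * Q - s * T) ^ 2 / ((Q + T) ^ 2 * (s + p)) := by positivity
  linarith

/-- Jensen's inequality for the concave homogeneous function `(p, s) ↦ p s / (p + s)`. -/
lemma harmonic_integral {α : Type*} [MeasurableSpace α] {μ : Measure α} {p s : α → ℝ} {Q T : ℝ}
    (hpi : Integrable p μ) (hsi : Integrable s μ) (hp0 : ∀ x, 0 ≤ p x) (hs0 : ∀ x, 0 ≤ s x)
    (hQ : Q = ∫ x, s x ∂μ) (hT : T = ∫ x, p x ∂μ) (hQT : 0 < Q + T) :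
    ∫ x, p x * (s x / (s x + p x)) ∂μ ≤ T * (Q / (Q + T)) := by
  have hR : Integrable (fun x => p x * (Q / (Q + T)) ^ 2 + s x * (T / (Q + T)) ^ 2) μ :=
    (hpi.mul_const _).add (hsi.mul_const _)
  have h := integral_mono_of_nonneg (ae_of_all _ fun x =>
    mul_nonneg (hp0 x) (div_nonneg (hs0 x) (add_nonneg (hs0 x) (hp0 x)))) hR
    (ae_of_all _ fun x => harmonic_le (hp0 x) (hs0 x) hQT)
  refine h.trans (le_of_eq ?_)
  rw [integral_add (hpi.mul_const _) (hsi.mul_const _), integral_mul_const, integral_mul_const,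
    ← hQ, ← hT]
  field_simp

/-- The weight `Q / (Q + T)`, with `Q(y) = E ⟨∇ g(X), y⟩²` and `T = E |∇ g(X)|²`, has mean bounded
below independently of the dimension. For fixed `x`, the ratio `s / (s + p)`, with
`s = ⟨∇ g(x), y⟩²` and `p = |∇ g(x)|²`, has `y`-mean `kap`, and the map
`(p, s) ↦ p s / (p + s)` is concave and homogeneous. -/
lemma omega_lower {n : ℕ} (g : MvPolynomial (Fin n) ℝ) (hT : 0 < grad2 g) :
    kap ≤ ∫ y, MvPolynomial.eval y (qform g) / (MvPolynomial.eval y (qform g) + grad2 g)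
      ∂(gam n) := by
  set T := grad2 g with hTdef
  let p : (Fin n → ℝ) → ℝ := fun x => ∑ i, MvPolynomial.eval x (MvPolynomial.pderiv i g) ^ 2
  have hp0 : ∀ x, 0 ≤ p x := fun x => Finset.sum_nonneg fun _ _ => sq_nonneg _
  have hpc : Continuous p :=
    continuous_finsetSum _ fun i _ => (MvPolynomial.continuous_eval _).pow 2
  have hpi : Integrable p (gam n) := integrable_finsetSum _ fun i _ => integrable_eval_sq _
  let s : (Fin n → ℝ) × (Fin n → ℝ) → ℝ := fun z => MvPolynomial.eval z.1 (dir z.2 g) ^ 2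
  have hs0 : ∀ z, 0 ≤ s z := fun z => sq_nonneg _
  have hsc : Continuous s := (continuous_eval_dir g).pow 2
  let F : (Fin n → ℝ) × (Fin n → ℝ) → ℝ := fun z => p z.1 * (s z / (s z + p z.1))
  have hFm : Measurable F := by
    have h1 := hpc.measurable
    have h2 := hsc.measurable
    fun_prop
  have hr : ∀ z, 0 ≤ s z / (s z + p z.1) ∧ s z / (s z + p z.1) ≤ 1 := fun z =>
    ⟨div_nonneg (hs0 z) (add_nonneg (hs0 z) (hp0 _)),
      div_le_one_of_le₀ (by linarith [hp0 z.1]) (add_nonneg (hs0 z) (hp0 _))⟩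
  have hFi : Integrable F ((gam n).prod (gam n)) := by
    refine (measurePreserving_fst.integrable_comp_of_integrable hpi :
      Integrable (p ∘ Prod.fst) ((gam n).prod (gam n))).mono hFm.aestronglyMeasurable
        (ae_of_all _ fun z => ?_)
    simp only [F, Function.comp, norm_mul, Real.norm_eq_abs]
    rw [abs_of_nonneg (hr z).1]
    exact mul_le_of_le_one_right (abs_nonneg _) (hr z).2
  have hFx : ∀ x, ∫ y, F (x, y) ∂(gam n) = p x * kap := fun x => by
    simp only [F]
    rw [integral_const_mul]
    rcases (hp0 x).eq_or_lt with h | h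
    · rw [← h]; simp
    · congr 1
      simp only [s, eval_dir]
      exact integral_linear_kap n _ (p x) rfl h
  have hQ0 := eval_qform_nonneg g
  have hFy : ∀ y, ∫ x, F (x, y) ∂(gam n) ≤
      T * (MvPolynomial.eval y (qform g) / (MvPolynomial.eval y (qform g) + T)) := fun y => by
    exact harmonic_integral hpi (integrable_eval_sq (dir y g)) hp0 (fun x => hs0 (x, y))
      (eval_qform g y) hTdef (by have := hQ0 y; linarith)
  have hω : Integrable (fun y => T * (MvPolynomial.eval y (qform g) /
      (MvPolynomial.eval y (qform g) + T))) (gam n) := by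
    refine Integrable.const_mul (Integrable.of_bound (C := 1) ?_ (ae_of_all _ fun y => ?_)) _
    · exact ((MvPolynomial.continuous_eval _).div ((MvPolynomial.continuous_eval _).add
        continuous_const) fun y => (add_pos_of_nonneg_of_pos (hQ0 y) hT).ne').aestronglyMeasurable
    · have := hQ0 y
      rw [Real.norm_eq_abs, abs_of_nonneg (by positivity)]
      exact div_le_one_of_le₀ (by linarith) (by positivity)
  have h1 := integral_prod_symm F hFi
  rw [integral_prod F hFi] at h1
  simp only [hFx] at h1
  rw [integral_mul_const] at h1
  have e1 : ∫ x, p x ∂(gam n) = T := rfl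
  have h2 := integral_mono hFi.integral_prod_right hω hFy
  rw [← h1, e1, integral_const_mul] at h2
  exact le_of_mul_le_mul_left h2 hT

/-! ### Small ball estimate and derivative estimate -/

/-- Smoothed small ball estimate for polynomials of degree at most `q` in standard Gaussian
variables. -/
def SmallBall (q : ℕ) : Prop :=
  ∃ C : ℝ, 0 < C ∧ ∀ (n : ℕ) (h : MvPolynomial (Fin n) ℝ), h.totalDegree ≤ q →
    ∀ δ : ℝ, 0 < δ → ∀ N : ℝ, 0 < N → N = ∫ x, MvPolynomial.eval x h ^ 2 ∂(gam n) →
    ∫ x, δ ^ 2 / (MvPolynomial.eval x h ^ 2 + δ ^ 2) ∂(gam n)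
      ≤ C * (δ / Real.sqrt N) ^ ((1 : ℝ) / q)

/-- The derivative estimate for the standard Gaussian measure, for test functions which may grow
linearly away from the mean. -/
def DerivBound (d : ℕ) : Prop :=
  ∃ C : ℝ, 0 < C ∧ ∀ (n : ℕ) (g : MvPolynomial (Fin n) ℝ), g.totalDegree ≤ d →
    ∀ σ : ℝ, 0 < σ → σ = Real.sqrt (variance (fun x => MvPolynomial.eval x g) (gam n)) →
    ∀ (φ φ' : ℝ → ℝ) (A B : ℝ), (∀ x, HasDerivAt φ (φ' x) x) → Continuous φ' → 0 < A → 0 < B →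
    (∀ x, |φ x| ≤ A * (1 + |x - ∫ x, MvPolynomial.eval x g ∂(gam n)| / σ)) →
    (∀ x, |φ' x| ≤ B) →
    ∫ x, φ' (MvPolynomial.eval x g) ∂(gam n)
      ≤ C * (A / σ) ^ ((1 : ℝ) / d) * B ^ (1 - (1 : ℝ) / d)

lemma sigma_le {n : ℕ} (g : MvPolynomial (Fin n) ℝ) {σ : ℝ}
    (h : σ = Real.sqrt (variance (fun x => MvPolynomial.eval x g) (gam n))) :
    σ ≤ 2 * Real.sqrt (grad2 g) := by
  have h1 := poincare g
  have h0 := grad2_nonneg g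
  rw [h]
  refine Real.sqrt_le_iff.mpr ⟨by positivity, ?_⟩
  rw [mul_pow, Real.sq_sqrt h0]; linarith

/-- In degree one the gradient is constant, so integration by parts alone suffices. -/
lemma derivBound_one : DerivBound 1 := by
  obtain ⟨C, hC, hibp⟩ := ibp_expect 1
  have hk := kap_pos
  refine ⟨2 * C / kap, by positivity, ?_⟩
  intro n g hg σ hσ hσe φ φ' A B hφ hφc hA hB hφA hφB
  have hσT := sigma_le g hσe
  have hsT : 0 < Real.sqrt (grad2 g) := by linarith
  have hT : 0 < grad2 g := Real.sqrt_pos.mp hsT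
  have hconst : ∀ i, ∃ c : ℝ, MvPolynomial.pderiv i g = MvPolynomial.C c := fun i => by
    have := totalDegree_pderiv_le i g
    exact ⟨_, MvPolynomial.totalDegree_eq_zero_iff_eq_C.mp (by omega)⟩
  choose c hc using hconst
  have hTc : grad2 g = ∑ i, c i ^ 2 := by simp [grad2, hc]
  have h := hibp n g 1 hg (by simp) (by simp) 0 le_rfl (by simp) _ hsT σ hσ hσe φ φ' A B hφ hφc
    hA.le hφA hφB
  rw [Real.sq_sqrt hT.le] at h
  simp only [eval_dir, hc, MvPolynomial.eval_C, map_one, add_zero, div_one, one_mul] at h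
  rw [integral_prod_mul (μ := gam n) (ν := gam n) (fun x => φ' (MvPolynomial.eval x g))
    (fun y => (∑ i, y i * c i) ^ 2 / ((∑ i, y i * c i) ^ 2 + grad2 g)),
    integral_linear_kap n c _ hTc hT] at h
  have h2 : C * A / Real.sqrt (grad2 g) ≤ 2 * C * A / σ := by
    rw [div_le_div_iff₀ hsT hσ]
    nlinarith [mul_pos hC hA]
  have h3 := h.trans h2
  rw [← le_div_iff₀ hk] at h3
  refine h3.trans (le_of_eq ?_)
  simp
  ring

lemma omega_le_rpow {Q T α : ℝ} (hQ : 0 < Q) (hT : 0 < T) (hα : 0 ≤ α) (hα1 : α ≤ 1) :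
    Q / (Q + T) ≤ (Real.sqrt Q / Real.sqrt T) ^ α := by
  have hr : 0 < Real.sqrt Q / Real.sqrt T := by positivity
  have hQT : Q / (Q + T) ≤ (Real.sqrt Q / Real.sqrt T) ^ 2 := by
    rw [div_pow, Real.sq_sqrt hQ.le, Real.sq_sqrt hT.le]
    gcongr; linarith
  rcases le_total 1 (Real.sqrt Q / Real.sqrt T) with h | h
  · refine le_trans ?_ (Real.one_le_rpow h hα)
    exact div_le_one_of_le₀ (by linarith) (by positivity)
  · refine hQT.trans ?_
    calc (Real.sqrt Q / Real.sqrt T) ^ 2 ≤ (Real.sqrt Q / Real.sqrt T) ^ 1 :=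
          pow_le_pow_of_le_one hr.le h (by norm_num)
      _ = (Real.sqrt Q / Real.sqrt T) ^ (1 : ℝ) := by simp
      _ ≤ _ := Real.rpow_le_rpow_of_exponent_ge hr h hα1

/-- `E φ'(g)` times the mean of the weight splits into a part handled by integration by parts, of
size `A / δ`, and a part where the directional derivative is below the scale `δ`, of size
`B (δ / σ) ^ (1 / k)`. -/
lemma derivBound_of_smallBall {k : ℕ} (hk1 : 1 ≤ k) (hS : SmallBall k) : DerivBound (k + 1) := by
  obtain ⟨C₁, hC₁, hibp⟩ := ibp_expect (k + 1)
  obtain ⟨C₂, hC₂, hsb⟩ := hS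
  have hk := kap_pos
  refine ⟨(C₁ + 2 * C₂) / kap, by positivity, ?_⟩
  intro n g hg σ hσ hσe φ φ' A B hφ hφc hA hB hφA hφB
  have hσT := sigma_le g hσe
  have hsT : 0 < Real.sqrt (grad2 g) := by linarith
  have hT : 0 < grad2 g := Real.sqrt_pos.mp hsT
  have hkR : (1 : ℝ) ≤ k := by exact_mod_cast hk1
  set α : ℝ := 1 / (k : ℝ) with hαdef
  have hα0 : 0 < α := by positivity
  have hα1 : α ≤ 1 := by rw [hαdef, div_le_one (by linarith)]; exact hkR
  set E := ∫ x, φ' (MvPolynomial.eval x g) ∂(gam n) with hE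
  -- the optimal scale balances the two error terms below
  set r := A / (σ * B) with hr
  have hr0 : 0 < r := by positivity
  set δ := σ * r ^ ((k : ℝ) / (k + 1)) with hδdef
  have hδ : 0 < δ := by positivity
  have hQ0 := eval_qform_nonneg g
  have hQT : ∀ y, 0 < MvPolynomial.eval y (qform g) + grad2 g := fun y => by
    have := hQ0 y; linarith
  have hmain := hibp n g (qform g) hg (totalDegree_qform g) hQ0 (grad2 g) hT.le hQT δ hδ σ hσ hσe
    φ φ' A B hφ hφc hA.le hφA hφB
  let ω : (Fin n → ℝ) → ℝ := fun y =>
    MvPolynomial.eval y (qform g) / (MvPolynomial.eval y (qform g) + grad2 g)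
  have hω0 : ∀ y, 0 ≤ ω y := fun y => div_nonneg (hQ0 y) (hQT y).le
  have hω1 : ∀ y, ω y ≤ 1 := fun y => div_le_one_of_le₀ (by linarith) (hQT y).le
  have hωc : Continuous ω := (MvPolynomial.continuous_eval _).div
    ((MvPolynomial.continuous_eval _).add continuous_const) fun y => (hQT y).ne'
  have hωi : Integrable ω (gam n) := Integrable.of_bound hωc.aestronglyMeasurable 1
    (ae_of_all _ fun y => by rw [Real.norm_eq_abs, abs_of_nonneg (hω0 y)]; exact hω1 y)
  have hφi : Integrable (fun x => φ' (MvPolynomial.eval x g)) (gam n) :=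
    Integrable.of_bound (hφc.comp (MvPolynomial.continuous_eval g)).aestronglyMeasurable B
      (ae_of_all _ fun x => hφB _)
  let a : (Fin n → ℝ) × (Fin n → ℝ) → ℝ := fun z => MvPolynomial.eval z.1 (dir z.2 g)
  have hac : Continuous a := continuous_eval_dir g
  let H : (Fin n → ℝ) × (Fin n → ℝ) → ℝ := fun z => ω z.2 * (δ ^ 2 / (a z ^ 2 + δ ^ 2))
  have hk01 : ∀ z, 0 ≤ δ ^ 2 / (a z ^ 2 + δ ^ 2) ∧ δ ^ 2 / (a z ^ 2 + δ ^ 2) ≤ 1 := fun z =>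
    ⟨by positivity, div_le_one_of_le₀ (by nlinarith [sq_nonneg (a z)]) (by positivity)⟩
  have hH0 : ∀ z, 0 ≤ H z := fun z => mul_nonneg (hω0 _) (hk01 z).1
  have hH1 : ∀ z, H z ≤ 1 := fun z => mul_le_one₀ (hω1 _) (hk01 z).1 (hk01 z).2
  have hHc : Continuous H := (hωc.comp continuous_snd).mul
    (continuous_const.div ((hac.pow 2).add continuous_const) fun z => by positivity)
  have hHi : Integrable H ((gam n).prod (gam n)) :=
    Integrable.of_bound hHc.aestronglyMeasurable 1
      (ae_of_all _ fun y => by rw [Real.norm_eq_abs, abs_of_nonneg (hH0 y)]; exact hH1 y)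
  have hpi : Integrable (fun z : (Fin n → ℝ) × (Fin n → ℝ) =>
      φ' (MvPolynomial.eval z.1 g) * ω z.2) ((gam n).prod (gam n)) := hφi.mul_prod hωi
  have hφHi : Integrable (fun z : (Fin n → ℝ) × (Fin n → ℝ) =>
      φ' (MvPolynomial.eval z.1 g) * H z) ((gam n).prod (gam n)) := by
    refine Integrable.of_bound (((hφc.comp (MvPolynomial.continuous_eval g)).comp
      continuous_fst).mul hHc).aestronglyMeasurable B (ae_of_all _ fun z => ?_)
    rw [Real.norm_eq_abs, abs_mul, abs_of_nonneg (hH0 z)]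
    calc _ ≤ B * 1 := mul_le_mul (hφB _) (hH1 z) (hH0 z) hB.le
      _ = B := mul_one B
  have hsplit : E * ∫ y, ω y ∂(gam n) ≤ C₁ * A / δ +
      ∫ z, φ' (MvPolynomial.eval z.1 g) * H z ∂((gam n).prod (gam n)) := by
    rw [hE, ← integral_prod_mul (μ := gam n) (ν := gam n), ← sub_le_iff_le_add,
      ← integral_sub hpi hφHi]
    refine le_trans (le_of_eq ?_) hmain
    congr 1
    ext z
    have : a z ^ 2 + δ ^ 2 ≠ 0 := by positivity
    have e1 : a z ^ 2 / (a z ^ 2 + δ ^ 2) = 1 - δ ^ 2 / (a z ^ 2 + δ ^ 2) := by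
      field_simp; ring
    change _ = φ' (MvPolynomial.eval z.1 g) * (ω z.2 * (a z ^ 2 / (a z ^ 2 + δ ^ 2)))
    rw [e1]
    simp only [H]
    ring
  have hHint : ∫ z, H z ∂((gam n).prod (gam n)) ≤ C₂ * (δ / Real.sqrt (grad2 g)) ^ α := by
    rw [integral_prod_symm H hHi]
    refine (integral_mono hHi.integral_prod_right
      (integrable_const (C₂ * (δ / Real.sqrt (grad2 g)) ^ α)) fun y => ?_).trans (by simp)
    simp only [H]
    rw [integral_const_mul]
    rcases (hQ0 y).eq_or_lt with h | h
    · have : ω y = 0 := by simp only [ω]; rw [← h]; simp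
      rw [this, zero_mul]; positivity
    · have h1 := hsb n (dir y g) (totalDegree_dir_le y g hg) δ hδ _ h (eval_qform g y)
      have h2 := omega_le_rpow h hT hα0.le hα1
      calc ω y * ∫ x, δ ^ 2 / (a (x, y) ^ 2 + δ ^ 2) ∂(gam n)
          ≤ (Real.sqrt (MvPolynomial.eval y (qform g)) / Real.sqrt (grad2 g)) ^ α *
            (C₂ * (δ / Real.sqrt (MvPolynomial.eval y (qform g))) ^ α) :=
          mul_le_mul h2 h1 (integral_nonneg fun x => (hk01 (x, y)).1) (by positivity)
        _ = C₂ * ((Real.sqrt (MvPolynomial.eval y (qform g)) / Real.sqrt (grad2 g)) *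
            (δ / Real.sqrt (MvPolynomial.eval y (qform g)))) ^ α := by
          rw [Real.mul_rpow (by positivity) (by positivity)]; ring
        _ = _ := by
          have := (Real.sqrt_pos.mpr h).ne'
          congr 2
          field_simp
  have hsecond : ∫ z, φ' (MvPolynomial.eval z.1 g) * H z ∂((gam n).prod (gam n))
      ≤ B * (C₂ * (2 * (δ / σ) ^ α)) := by
    refine (integral_mono hφHi (hHi.const_mul B) fun z =>
      mul_le_mul_of_nonneg_right ((le_abs_self _).trans (hφB _)) (hH0 z)).trans ?_
    rw [integral_const_mul]
    refine mul_le_mul_of_nonneg_left (hHint.trans ?_) hB.le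
    refine mul_le_mul_of_nonneg_left ?_ hC₂.le
    calc (δ / Real.sqrt (grad2 g)) ^ α ≤ (2 * (δ / σ)) ^ α := by
          refine Real.rpow_le_rpow (by positivity) ?_ hα0.le
          rw [← mul_div_assoc, div_le_div_iff₀ hsT hσ]
          nlinarith
      _ = 2 ^ α * (δ / σ) ^ α := Real.mul_rpow (by norm_num) (by positivity)
      _ ≤ 2 * (δ / σ) ^ α := by
          refine mul_le_mul_of_nonneg_right ?_ (by positivity)
          calc (2 : ℝ) ^ α ≤ 2 ^ (1 : ℝ) := Real.rpow_le_rpow_of_exponent_le (by norm_num) hα1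
            _ = 2 := by simp
  set β : ℝ := 1 / ((k + 1 : ℕ) : ℝ) with hβ
  have hkk : (k : ℝ) / (k + 1) = 1 - β := by
    rw [hβ]; push_cast; field_simp; ring
  have e1 : (δ / σ) ^ α = r ^ β := by
    rw [hδdef, mul_div_cancel_left₀ _ hσ.ne', ← Real.rpow_mul hr0.le]
    congr 1
    rw [hαdef, hβ]; push_cast; field_simp
  have e2 : A / δ = B * r ^ β := by
    rw [hδdef, hkk, Real.rpow_sub hr0, Real.rpow_one]
    have : 0 < r ^ β := by positivity
    rw [hr] at this ⊢
    field_simp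
  have e3 : B * r ^ β = (A / σ) ^ β * B ^ (1 - β) := by
    rw [Real.rpow_sub hB, Real.rpow_one, hr, ← div_div, Real.div_rpow (by positivity) hB.le]
    ring
  have htot : E * ∫ y, ω y ∂(gam n) ≤ (C₁ + 2 * C₂) * ((A / σ) ^ β * B ^ (1 - β)) := by
    rw [← e3]
    rw [e1] at hsecond
    rw [mul_div_assoc, e2] at hsplit
    linarith
  have hrhs : 0 ≤ (A / σ) ^ β * B ^ (1 - β) := by positivity
  have hkE : E * kap ≤ (C₁ + 2 * C₂) * ((A / σ) ^ β * B ^ (1 - β)) := by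
    rcases le_total E 0 with h | h
    · exact (mul_nonpos_of_nonpos_of_nonneg h hk.le).trans (by positivity)
    · exact (mul_le_mul_of_nonneg_left (omega_lower g hT) h).trans htot
  rw [← le_div_iff₀ hk] at hkE
  refine hkE.trans (le_of_eq ?_)
  ring

/-! ### From derivative bounds to small ball bounds -/

lemma abs_arctan_sub_le (x m : ℝ) : |Real.arctan x - Real.arctan m| ≤ 4 := by
  have h1 := Real.arctan_lt_pi_div_two x
  have h2 := Real.neg_pi_div_two_lt_arctan x
  have h3 := Real.arctan_lt_pi_div_two m
  have h4 := Real.neg_pi_div_two_lt_arctan m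
  rw [abs_le]; constructor <;> linarith [Real.pi_lt_four]

lemma abs_arctan_sub_mul_le (x m : ℝ) :
    |Real.arctan x - Real.arctan m| * |m| ≤ 8 * |x - m| := by
  rcases le_total (|m| / 2) |x - m| with h | h
  · nlinarith [abs_arctan_sub_le x m, abs_nonneg m, abs_nonneg (Real.arctan x - Real.arctan m)]
  · have hmv := (convex_closedBall m (|m| / 2)).norm_image_sub_le_of_norm_hasDerivWithin_le
      (f := Real.arctan) (f' := fun y => 1 / (1 + y ^ 2)) (C := 1 / (1 + m ^ 2 / 4))
      (x := m) (y := x)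
      (fun y _ => (Real.hasDerivAt_arctan y).hasDerivWithinAt) (fun y hy => by
        rw [Metric.mem_closedBall, Real.dist_eq] at hy
        have h2 : |m| / 2 ≤ |y| := by
          have := abs_sub_abs_le_abs_sub m y
          rw [abs_sub_comm] at this
          linarith
        have h3 : m ^ 2 / 4 ≤ y ^ 2 := by
          rw [← sq_abs m, ← sq_abs y]
          nlinarith [abs_nonneg m]
        rw [Real.norm_eq_abs, abs_of_pos (by positivity)]
        gcongr) (Metric.mem_closedBall_self (by positivity))
      (by rw [Metric.mem_closedBall, Real.dist_eq]; exact h)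
    simp only [Real.norm_eq_abs] at hmv
    have h4 : |m| ≤ 1 + m ^ 2 / 4 := by
      rw [← sq_abs m]; nlinarith [sq_nonneg (|m| - 2)]
    have hpos : 0 < 1 + m ^ 2 / 4 := by positivity
    calc |Real.arctan x - Real.arctan m| * |m|
        ≤ (1 / (1 + m ^ 2 / 4) * |x - m|) * (1 + m ^ 2 / 4) :=
          mul_le_mul hmv h4 (abs_nonneg _) (by positivity)
      _ = |x - m| := by field_simp
      _ ≤ 8 * |x - m| := by linarith [abs_nonneg (x - m)]

/-- The derivative bound is applied to a rescaled arctangent centred at the mean. -/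
lemma smallBall_of_derivBound {d : ℕ} (hd : 1 ≤ d) (hT : DerivBound d) : SmallBall d := by
  obtain ⟨C, hC, hbd⟩ := hT
  refine ⟨1 + 8 * C, by positivity, ?_⟩
  intro n h hdeg δ hδ N hN hNe
  have hdR : (1 : ℝ) ≤ d := by exact_mod_cast hd
  set β : ℝ := (1 : ℝ) / d with hβ
  have hβ0 : 0 < β := by positivity
  have hβ1 : β ≤ 1 := by rw [hβ, div_le_one (by linarith)]; exact hdR
  set m := ∫ x, MvPolynomial.eval x h ∂(gam n) with hm
  have hvar := variance_eval h
  rw [← hNe, ← hm] at hvar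
  have hsN : 0 < Real.sqrt N := Real.sqrt_pos.mpr hN
  have hpw : 0 ≤ (δ / Real.sqrt N) ^ β := by positivity
  rcases (variance_nonneg (fun x => MvPolynomial.eval x h) (gam n)).eq_or_lt with hv | hv
  · -- in the degenerate case the polynomial is almost surely equal to its mean
    rw [← hv] at hvar
    have hmN : m ^ 2 = N := by linarith
    have hL : MemLp (fun x => MvPolynomial.eval x h - m) 2 (gam n) :=
      (memLp_eval h 2 (by simp)).sub (memLp_const m)
    have hv2 : ∫ x, (MvPolynomial.eval x h - m) ^ 2 ∂(gam n) = 0 := by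
      rw [hv, variance_eq_integral (MvPolynomial.continuous_eval h).measurable.aemeasurable]
    have hae : ∀ᵐ x ∂(gam n), MvPolynomial.eval x h = m := by
      rw [integral_eq_zero_iff_of_nonneg (fun x => sq_nonneg _) hL.integrable_sq] at hv2
      filter_upwards [hv2] with x hx
      simpa [sub_eq_zero] using hx
    have e : ∫ x, δ ^ 2 / (MvPolynomial.eval x h ^ 2 + δ ^ 2) ∂(gam n) = δ ^ 2 / (N + δ ^ 2) := by
      rw [integral_congr_ae (g := fun _ => δ ^ 2 / (N + δ ^ 2))]
      · simp
      · filter_upwards [hae] with x hx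
        rw [hx, hmN]
    rw [e]
    have hr : 0 < δ / Real.sqrt N := by positivity
    have h1 : δ ^ 2 / (N + δ ^ 2) ≤ (δ / Real.sqrt N) ^ β := by
      have hω := omega_le_rpow (Q := δ ^ 2) (T := N) (by positivity) hN hβ0.le hβ1
      rwa [Real.sqrt_sq hδ.le, add_comm] at hω
    nlinarith [mul_nonneg hC.le hpw]
  · set σ := Real.sqrt (variance (fun x => MvPolynomial.eval x h) (gam n)) with hσe
    have hσ : 0 < σ := Real.sqrt_pos.mpr hv
    have hσ2 : σ ^ 2 = N - m ^ 2 := by rw [hσe, Real.sq_sqrt hv.le, hvar]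
    have hσm : 0 < σ + |m| := by positivity
    have hNσ : Real.sqrt N ≤ σ + |m| := by
      refine Real.sqrt_le_iff.mpr ⟨hσm.le, ?_⟩
      have := sq_abs m
      nlinarith [mul_nonneg hσ.le (abs_nonneg m)]
    have hder : ∀ x, HasDerivAt (fun x => δ * (Real.arctan (x / δ) - Real.arctan (m / δ)))
        (δ ^ 2 / (x ^ 2 + δ ^ 2)) x := fun x => by
      refine (((((hasDerivAt_id x).div_const δ).arctan).sub_const _).const_mul δ).congr_deriv ?_
      have h2 : (1 : ℝ) + (x / δ) ^ 2 ≠ 0 := by positivity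
      have h3 : x ^ 2 + δ ^ 2 ≠ 0 := by positivity
      simp only [id]
      field_simp
      ring
    have hcont : Continuous (fun x : ℝ => δ ^ 2 / (x ^ 2 + δ ^ 2)) :=
      continuous_const.div (by fun_prop) fun x => by positivity
    have h1 := hbd n h hdeg σ hσ hσe (fun x => δ * (Real.arctan (x / δ) - Real.arctan (m / δ)))
      (fun x => δ ^ 2 / (x ^ 2 + δ ^ 2)) (8 * δ * σ / (σ + |m|)) 1 hder hcont (by positivity)
      one_pos (fun x => ?_) (fun x => ?_)
    · rw [Real.one_rpow, mul_one] at h1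
      refine h1.trans ?_
      have h2 : 8 * δ * σ / (σ + |m|) / σ ≤ 8 * (δ / Real.sqrt N) := by
        have : 8 * δ * σ / (σ + |m|) / σ = 8 * (δ / (σ + |m|)) := by field_simp
        rw [this]
        gcongr
      have h3 : (8 * δ * σ / (σ + |m|) / σ) ^ β ≤ 8 * (δ / Real.sqrt N) ^ β := by
        refine (Real.rpow_le_rpow (by positivity) h2 hβ0.le).trans ?_
        rw [Real.mul_rpow (by norm_num) (by positivity)]
        refine mul_le_mul_of_nonneg_right ?_ hpw
        calc (8 : ℝ) ^ β ≤ 8 ^ (1 : ℝ) := Real.rpow_le_rpow_of_exponent_le (by norm_num) hβ1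
          _ = 8 := by simp
      nlinarith [mul_le_mul_of_nonneg_left h3 hC.le]
    · rw [← hm]
      rw [abs_mul, abs_of_pos hδ]
      set D := |Real.arctan (x / δ) - Real.arctan (m / δ)| with hD
      have a1 : D ≤ 4 := abs_arctan_sub_le _ _
      have a2 : D * |m| ≤ 8 * |x - m| := by
        have := abs_arctan_sub_mul_le (x / δ) (m / δ)
        rw [← sub_div, abs_div, abs_div, abs_of_pos hδ, ← mul_div_assoc, ← mul_div_assoc,
          div_le_div_iff_of_pos_right hδ] at this
        exact this
      have e : 8 * δ * σ / (σ + |m|) * (1 + |x - m| / σ) = δ * (8 * (σ + |x - m|) / (σ + |m|)) := by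
        field_simp
      rw [e]
      refine mul_le_mul_of_nonneg_left ?_ hδ.le
      rw [le_div_iff₀ hσm]
      nlinarith
    · rw [abs_of_nonneg (by positivity)]
      exact div_le_one_of_le₀ (by nlinarith [sq_nonneg x]) (by positivity)

lemma derivBound (k : ℕ) : DerivBound (k + 1) := by
  induction k with
  | zero => exact derivBound_one
  | succ k ih =>
    exact derivBound_of_smallBall (by omega) (smallBall_of_derivBound (by omega) ih)

/-! ### General Gaussian vectors -/

/-- The polynomial `x ↦ g (b + L x)`. -/
noncomputable def affComp {n : ℕ} (L : (Fin n → ℝ) →ₗ[ℝ] (Fin n → ℝ)) (b : Fin n → ℝ)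
    (g : MvPolynomial (Fin n) ℝ) : MvPolynomial (Fin n) ℝ :=
  MvPolynomial.bind₁ (fun i => MvPolynomial.C (b i) +
    ∑ j, MvPolynomial.C (L (Pi.single j 1) i) * MvPolynomial.X j) g

lemma eval_affComp {n : ℕ} (L : (Fin n → ℝ) →ₗ[ℝ] (Fin n → ℝ)) (b : Fin n → ℝ)
    (g : MvPolynomial (Fin n) ℝ) (x : Fin n → ℝ) :
    MvPolynomial.eval x (affComp L b g) = MvPolynomial.eval (b + L x) g := by
  have hL : ∀ i, L x i = ∑ j, L (Pi.single j 1) i * x j := fun i => by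
    conv_lhs => rw [pi_eq_sum_univ' x]
    simp [map_sum, Pi.single, mul_comm]
  rw [affComp, ← MvPolynomial.coe_aeval_eq_eval, RingHom.coe_coe, MvPolynomial.aeval_bind₁,
    ← MvPolynomial.coe_aeval_eq_eval, RingHom.coe_coe]
  congr 2
  ext i
  simp [hL]

lemma totalDegree_affComp {n : ℕ} (L : (Fin n → ℝ) →ₗ[ℝ] (Fin n → ℝ)) (b : Fin n → ℝ)
    (g : MvPolynomial (Fin n) ℝ) : (affComp L b g).totalDegree ≤ g.totalDegree := by
  refine totalDegree_bind₁_le _ (fun i => ?_) g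
  refine (MvPolynomial.totalDegree_add _ _).trans (max_le (by simp) ?_)
  refine MvPolynomial.totalDegree_finsetSum_le fun j _ => ?_
  refine (MvPolynomial.totalDegree_mul _ _).trans ?_
  simp [MvPolynomial.totalDegree_X]

end GaussPoly

/-- Theorem: for every `d` there is `C(d) > 0` such that for every Gaussian random vector `X`
in `ℝⁿ`, every non-constant (as a random variable) polynomial `g` of total degree at most `d`,
and every `φ ∈ C₀^∞(ℝ)`, one has
`(𝔻g(X))^{1/(2d)} 𝔼 φ'(g(X)) ≤ C(d) ‖φ‖_∞^{1/d} ‖φ'‖_∞^{1-1/d}`. -/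
theorem expectation_deriv_bound (d : ℕ) (hd : 1 ≤ d) :
    ∃ C : ℝ, 0 < C ∧
      ∀ (n : ℕ) (μ : Measure (Fin n → ℝ)), IsGaussianVec μ →
        ∀ g : MvPolynomial (Fin n) ℝ, g.totalDegree ≤ d →
          0 < variance (fun x => MvPolynomial.eval x g) μ →
          ∀ φ : ℝ → ℝ, ContDiff ℝ (⊤ : ℕ∞) φ → HasCompactSupport φ →
            (variance (fun x => MvPolynomial.eval x g) μ) ^ ((1 : ℝ) / (2 * d)) *
                ∫ x, deriv φ (MvPolynomial.eval x g) ∂μ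
              ≤ C * (⨆ x : ℝ, |φ x|) ^ ((1 : ℝ) / d) *
                  (⨆ x : ℝ, |deriv φ x|) ^ (1 - (1 : ℝ) / d) := by
  obtain ⟨k, rfl⟩ : ∃ k, d = k + 1 := ⟨d - 1, by omega⟩
  obtain ⟨C, hC, hbd⟩ := GaussPoly.derivBound k
  refine ⟨C, hC, ?_⟩
  rintro n μ ⟨L, b, rfl⟩ g hg hvar φ hφ hφs
  have hLm : AEMeasurable (fun x => b + L x) (GaussPoly.gam n) :=
    (continuous_const.add L.continuous_of_finiteDimensional).measurable.aemeasurable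
  have hdφ : Continuous (deriv φ) := hφ.continuous_deriv (by simp)
  have hv : variance (fun x => MvPolynomial.eval x g) ((GaussPoly.gam n).map (fun x => b + L x))
      = variance (fun x => MvPolynomial.eval x (GaussPoly.affComp L b g)) (GaussPoly.gam n) := by
    rw [variance_map (MvPolynomial.continuous_eval g).measurable.aemeasurable hLm]
    simp only [Function.comp_def, GaussPoly.eval_affComp]
  have hi : ∫ x, deriv φ (MvPolynomial.eval x g) ∂((GaussPoly.gam n).map (fun x => b + L x))
      = ∫ x, deriv φ (MvPolynomial.eval x (GaussPoly.affComp L b g)) ∂(GaussPoly.gam n) := by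
    rw [integral_map hLm (f := fun x => deriv φ (MvPolynomial.eval x g))
      (hdφ.comp (MvPolynomial.continuous_eval g)).aestronglyMeasurable]
    simp only [GaussPoly.eval_affComp]
  rw [hv] at hvar ⊢
  rw [hi]
  have hdeg := (GaussPoly.totalDegree_affComp L b g).trans hg
  generalize GaussPoly.affComp L b g = f at hvar hdeg
  clear hv hi
  set V := variance (fun x => MvPolynomial.eval x f) (GaussPoly.gam n) with hV
  have hsV : 0 < Real.sqrt V := Real.sqrt_pos.mpr hvar
  -- compactness of the support makes both suprema genuine (finite) bounds
  have hbA : BddAbove (Set.range fun x : ℝ => |φ x|) :=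
    hφ.continuous.abs.bddAbove_range_of_hasCompactSupport hφs.abs
  have hbB : BddAbove (Set.range fun x : ℝ => |deriv φ x|) :=
    hdφ.abs.bddAbove_range_of_hasCompactSupport hφs.deriv.abs
  set A := ⨆ x : ℝ, |φ x| with hA
  set B := ⨆ x : ℝ, |deriv φ x| with hB
  have hA' : ∀ x, |φ x| ≤ A := fun x => le_ciSup hbA x
  have hB' : ∀ x, |deriv φ x| ≤ B := fun x => le_ciSup hbB x
  have hA0 : 0 ≤ A := (abs_nonneg _).trans (hA' 0)
  have hB0 : 0 ≤ B := (abs_nonneg _).trans (hB' 0)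
  have hrhs : 0 ≤ C * A ^ ((1 : ℝ) / ((k + 1 : ℕ) : ℝ)) *
      B ^ (1 - (1 : ℝ) / ((k + 1 : ℕ) : ℝ)) := by positivity
  have hzero : (∀ x, deriv φ x = 0) → V ^ ((1 : ℝ) / (2 * ((k + 1 : ℕ) : ℝ))) *
      ∫ x, deriv φ (MvPolynomial.eval x f) ∂(GaussPoly.gam n) ≤
        C * A ^ ((1 : ℝ) / ((k + 1 : ℕ) : ℝ)) * B ^ (1 - (1 : ℝ) / ((k + 1 : ℕ) : ℝ)) := by
    intro h
    simp only [h, integral_zero, mul_zero]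
    exact hrhs
  rcases hA0.eq_or_lt with hAz | hApos
  · refine hzero fun x => ?_
    have : φ = fun _ => 0 := funext fun y => by
      have := hA' y
      rw [← hAz] at this
      exact abs_nonpos_iff.mp this
    rw [this]; simp
  rcases hB0.eq_or_lt with hBz | hBpos
  · refine hzero fun x => ?_
    have := hB' x
    rw [← hBz] at this
    exact abs_nonpos_iff.mp this
  have hmain := hbd n f hdeg (Real.sqrt V) hsV rfl φ (deriv φ) A B
    (fun x => (hφ.differentiable (by simp)).differentiableAt.hasDerivAt) hdφ hApos hBpos
    (fun x => (hA' x).trans (le_mul_of_one_le_right hA0 (by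
      have : 0 ≤ |x - ∫ x, MvPolynomial.eval x f ∂(GaussPoly.gam n)| / Real.sqrt V := by positivity
      linarith))) hB'
  set β : ℝ := (1 : ℝ) / ((k + 1 : ℕ) : ℝ) with hβ
  have hVβ : V ^ ((1 : ℝ) / (2 * ((k + 1 : ℕ) : ℝ))) = Real.sqrt V ^ β := by
    rw [Real.sqrt_eq_rpow, ← Real.rpow_mul hvar.le, hβ]
    congr 1
    field_simp
  rw [hVβ]
  have hp : 0 < Real.sqrt V ^ β := by positivity
  refine (mul_le_mul_of_nonneg_left hmain hp.le).trans (le_of_eq ?_)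
  rw [Real.div_rpow hA0 hsV.le]
  field_simp
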